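/- arXiv:2404.05513 — 2 statements merged into one kernel-verified Lean document; each statement's English description precedes it below -/
import Mathlib

section
/- Let Γ be a nonamenable discrete group and let Λ be a group with more than one element. Let W be the group of finitely supported functions f : Γ → Λ (those with f(g) = 1 for all but finitely many g ∈ Γ) under pointwise multiplication, on which Γ acts by shifts (s·f)(g) = f(s⁻¹g), and let Λ ≀ Γ = Γ ⋉ W be the corresponding semidirect product (the wreath product). Then Λ ≀ Γ is not weakly amenable: there is no C ≥ 1 such that Λ ≀ Γ is weakly amenable with constant at most C. -/
/-! The base of the wreath product may be replaced by the finitely supported functions with values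
in a nontrivial cyclic subgroup `Z` of `Λ` (`WeaklyAmenableWithConst.of_injective`), so that it is an
abelian normal subgroup `N` of `G = Z ≀ Γ`. The theorem follows from a rigidity property of such
subgroups: if `G` is weakly amenable, then `N` carries finitely supported probability vectors which
are nearly invariant under conjugation by `G` and give no mass to `1`
(`exists_nearly_invariant_prob`). The support of a nontrivial element of `N` is a nonempty finite
subset of `Γ`, and taking supports is equivariant; averaging bounded functions on `Γ` over these
supports and passing to a limit along an ultrafilter gives an invariant mean on `Γ`
(`isAmenable_of_prob`).

The rigidity property rests on optimality of the constant. In a factorisation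
`φ (s⁻¹ t) = ⟪ξ t, η s⟫` the suprema of `‖ξ‖` and `‖η‖` are relaxed to mean squares over cosets of
`N`, computed along Følner sets of `N` (`AvgLE`, `Good`). If the constant of an approximating
multiplier `φ` is nearly optimal, averaging `ξ` with its right translate by `g ∈ G` cannot decrease
the mean squares by much; by the parallelogram law `ξ` is then nearly equal in mean square to its
translate on some coset (`exists_coset`), and the same holds for `η`. By Fourier analysis on the
dual of `N`, a mean-square bound on both factors controls the `L¹`-norm of the trigonometric
polynomial with coefficients `φ|N` (`nrm_le`). Consequently `φ|N` is nearly invariant in this norm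
under conjugation by `G` and under translation by `N` (`near_invariant`).

The square root of the modulus of that trigonometric polynomial has a Fourier transform in `ℓ²(N)`
with the same near invariance (`exists_l2`), and its squared modulus is nearly invariant in `ℓ¹(N)`
(`l1_le_of_l2`). Invariance under a nontrivial translation leaves a definite part of the mass
outside `1`, and since conjugation fixes `1` the restriction to `N ∖ {1}` may be normalised
(`exists_prob`).
-/

open scoped InnerProductSpace ComplexOrder ENNReal

noncomputable section

/-- A discrete group `Γ` is weakly amenable with constant at most `C` if for every finite
subset `F` and every `ε > 0` there is a finitely supported `φ : Γ → ℂ` with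
`|φ s − 1| ≤ ε` on `F`, which is a Herz–Schur multiplier of norm at most `C`, i.e.
`φ (s⁻¹ t) = ⟪ξ t, η s⟫` for bounded Hilbert-space-valued maps `ξ, η` whose sup-norms
have product at most `C`. -/
def WeaklyAmenableWithConst (Γ : Type*) [Group Γ] (C : ℝ) : Prop :=
  ∀ (F : Finset Γ) (ε : ℝ), 0 < ε →
    ∃ φ : Γ → ℂ, (Function.support φ).Finite ∧ (∀ s ∈ F, ‖φ s - 1‖ ≤ ε) ∧
      ∃ (H : Type) (_ : NormedAddCommGroup H) (_ : InnerProductSpace ℂ H)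
        (_ : CompleteSpace H) (ξ η : Γ → H) (A B : ℝ),
        0 ≤ A ∧ 0 ≤ B ∧ (∀ t, ‖ξ t‖ ≤ A) ∧ (∀ s, ‖η s‖ ≤ B) ∧ A * B ≤ C ∧
        ∀ s t : Γ, φ (s⁻¹ * t) = ⟪ξ t, η s⟫_ℂ

/-- A discrete group `Γ` is amenable if there is a left-invariant mean on `ℓ∞(Γ)`:
a linear functional `m` that is positive (`m f ≥ 0` whenever `f ≥ 0`), normalised
(`m 1 = 1`) and left-invariant (`m (f (s⁻¹ ·)) = m f`). -/
def IsAmenable (Γ : Type*) [Group Γ] : Prop :=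
  ∃ m : lp (fun _ : Γ => ℂ) ∞ →ₗ[ℂ] ℂ,
    (∀ f : lp (fun _ : Γ => ℂ) ∞, (∀ x, 0 ≤ f x) → 0 ≤ m f) ∧
    (∀ f : lp (fun _ : Γ => ℂ) ∞, (∀ x, f x = 1) → m f = 1) ∧
    (∀ (s : Γ) (f g : lp (fun _ : Γ => ℂ) ∞),
      (∀ x, g x = f (s⁻¹ * x)) → m g = m f)

variable (Γ Λ : Type*) [Group Γ] [Group Λ]

/-- The group of finitely supported functions `Γ → Λ` under pointwise multiplication. -/
def FinSupportFns : Subgroup (Γ → Λ) where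
  carrier := {f | (Function.mulSupport f).Finite}
  one_mem' := by simp [Function.mulSupport_one]
  mul_mem' := by
    intro f g hf hg
    exact Set.Finite.subset (hf.union hg) (Function.mulSupport_mul f g)
  inv_mem' := by
    intro f hf
    simpa [Function.mulSupport_inv] using hf

/-- The shift action of `Γ` on the finitely supported functions `Γ → Λ`:
`(s · f) g = f (s⁻¹ g)`. -/
def shiftAut : Γ →* MulAut (FinSupportFns Γ Λ) where
  toFun s :=
    { toFun := fun f => ⟨fun g => (f : Γ → Λ) (s⁻¹ * g), by
        refine Set.Finite.subset (f.2.image (fun x => s * x)) ?_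
        intro g hg
        exact ⟨s⁻¹ * g, hg, by simp⟩⟩
      invFun := fun f => ⟨fun g => (f : Γ → Λ) (s * g), by
        refine Set.Finite.subset (f.2.image (fun x => s⁻¹ * x)) ?_
        intro g hg
        exact ⟨s * g, hg, by simp⟩⟩
      left_inv := by intro f; ext g; simp
      right_inv := by intro f; ext g; simp
      map_mul' := by intro f g; rfl }
  map_one' := by ext f g; simp
  map_mul' := by intro s t; ext f g; simp [mul_assoc]

/-- The wreath product `Λ ≀ Γ = Γ ⋉ ⨁_Γ Λ`, the semidirect product of the group of
finitely supported functions `Γ → Λ` by the shift action of `Γ`. -/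
def WreathProduct : Type _ := SemidirectProduct (FinSupportFns Γ Λ) Γ (shiftAut Γ Λ)

instance : Group (WreathProduct Γ Λ) := by unfold WreathProduct; infer_instance

open MeasureTheory Filter

set_option linter.unusedSectionVars false

/-! ### Fourier analysis on the dual of a discrete abelian group -/

section Dual

variable {N : Type*} [CommGroup N] [TopologicalSpace N] [DiscreteTopology N]

local instance : MeasurableSpace (PontryaginDual N) := borel _
local instance : BorelSpace (PontryaginDual N) := ⟨rfl⟩

/-- The normalised Haar measure on the compact dual of a discrete abelian group. -/
def dualHaar (N : Type*) [CommGroup N] [TopologicalSpace N] [DiscreteTopology N] :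
    Measure (PontryaginDual N) := Measure.haarMeasure ⊤

instance : (dualHaar N).IsHaarMeasure := by unfold dualHaar; infer_instance

instance : IsProbabilityMeasure (dualHaar N) := by
  constructor
  have := Measure.haarMeasure_self (K₀ := (⊤ : TopologicalSpace.PositiveCompacts (PontryaginDual N)))
  simpa [dualHaar] using this

/-- Evaluation at `a`, as a continuous function on the dual group. -/
def ev (a : N) : C(PontryaginDual N, ℂ) where
  toFun χ := (χ a : ℂ)
  continuous_toFun := by
    have h : Continuous fun χ : PontryaginDual N => χ a :=
      (continuous_eval_const a : Continuous fun χ : C(N, Circle) => χ a).comp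
        (ContinuousMonoidHom.isInducing_toContinuousMap N Circle).continuous
    exact continuous_subtype_val.comp h

@[simp] lemma ev_apply (a : N) (χ : PontryaginDual N) : ev a χ = (χ a : ℂ) := rfl

/-- Characters of a discrete abelian group separate points: a character with values in `ℚ/ℤ`
exists by injectivity of `ℚ/ℤ`, and `ℚ/ℤ` embeds into the circle. -/
lemma exists_dual_ne_one {a : N} (ha : a ≠ 1) : ∃ χ : PontryaginDual N, χ a ≠ 1 := by
  have h0 : (Additive.ofMul a) ≠ 0 := ha
  obtain ⟨c, hc⟩ := CharacterModule.exists_character_apply_ne_zero_of_ne_zero h0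
  let r : AddCircle (1 : ℚ) →+ AddCircle (1 : ℝ) :=
    QuotientAddGroup.map _ _ (Rat.castHom ℝ).toAddMonoidHom (by
      rw [AddSubgroup.zmultiples_le]
      simp [AddSubgroup.mem_comap])
  have hr : ∀ x, r x = 0 → x = 0 := by
    intro x
    induction x using QuotientAddGroup.induction_on with
    | H q =>
      intro h
      have h2 : ((q : ℝ) : AddCircle (1 : ℝ)) = 0 := h
      rw [AddCircle.coe_eq_zero_iff] at h2
      obtain ⟨n, hn⟩ := h2
      have : (n : ℚ) = q := by
        have : ((n : ℚ) : ℝ) = q := by simpa using hn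
        exact_mod_cast this
      exact (AddCircle.coe_eq_zero_iff (p := (1:ℚ)) (x := q)).2 ⟨n, by simpa using this⟩
  let f : N →* Circle :=
    { toFun := fun x => AddCircle.toCircle (r (c (Additive.ofMul x)))
      map_one' := by simp
      map_mul' := fun x y => by simp [AddCircle.toCircle_add] }
  refine ⟨(⟨f, continuous_of_discreteTopology⟩ : N →ₜ* Circle), fun h => ?_⟩
  have h1 : AddCircle.toCircle (r (c (Additive.ofMul a))) = 1 := h
  rw [← AddCircle.toCircle_zero (T := 1)] at h1
  exact hc (hr _ (AddCircle.injective_toCircle one_ne_zero h1))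

lemma integral_ev [DecidableEq N] (a : N) :
    ∫ χ, ev a χ ∂(dualHaar N) = if a = 1 then 1 else 0 := by
  split_ifs with h
  · subst h; simp
  · obtain ⟨χ₀, h₀⟩ := exists_dual_ne_one h
    -- translating by `χ₀` multiplies the integral by `χ₀ a ≠ 1`
    have h1 := integral_mul_left_eq_self (μ := dualHaar N) (fun χ => ev a χ) χ₀
    have h2 : ∀ χ : PontryaginDual N, ev a (χ₀ * χ) = (χ₀ a : ℂ) * ev a χ := fun χ => by
      change ((χ₀ a * χ a : Circle) : ℂ) = _
      simp
    simp only [h2] at h1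
    rw [integral_const_mul] at h1
    have h3 : ((χ₀ a : ℂ) - 1) ≠ 0 := by
      rw [sub_ne_zero]
      exact fun h => h₀ (Circle.coe_eq_one.1 h)
    have h4 : ((χ₀ a : ℂ) - 1) * ∫ χ, ev a χ ∂(dualHaar N) = 0 := by linear_combination h1
    exact (mul_eq_zero.1 h4).resolve_left h3

lemma star_ev (a : N) (χ : PontryaginDual N) : star (ev a χ) = ev a⁻¹ χ := by
  rw [ev_apply, ev_apply, map_inv, Circle.coe_inv_eq_conj]
  rfl

lemma ev_mul (a b : N) (χ : PontryaginDual N) : ev (a * b) χ = ev a χ * ev b χ := by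
  simp

lemma norm_ev (a : N) (χ : PontryaginDual N) : ‖ev a χ‖ = 1 := Circle.norm_coe _

lemma integrable_dual {E : Type*} [NormedAddCommGroup E]
    {f : PontryaginDual N → E} (hf : Continuous f) : Integrable f (dualHaar N) :=
  hf.integrable_of_hasCompactSupport (HasCompactSupport.of_compactSpace f)

/-- Bessel's identity, for vector coefficients. -/
lemma integral_norm_sq_sum {H : Type*} [NormedAddCommGroup H] [InnerProductSpace ℂ H]
    [DecidableEq N] (u : N → C(PontryaginDual N, ℂ))
    (hu : ∀ a b, ∫ χ, star (u a χ) * u b χ ∂(dualHaar N) = if a = b then 1 else 0)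
    (S : Finset N) (v : N → H) :
    ∫ χ, ‖∑ a ∈ S, u a χ • v a‖ ^ 2 ∂(dualHaar N) = ∑ a ∈ S, ‖v a‖ ^ 2 := by
  have key : ∀ χ, ((‖∑ a ∈ S, u a χ • v a‖ ^ 2 : ℝ) : ℂ)
      = ∑ a ∈ S, ∑ b ∈ S, star (u a χ) * u b χ * ⟪v a, v b⟫_ℂ := by
    intro χ
    push_cast
    refine (inner_self_eq_norm_sq_to_K (𝕜 := ℂ) (∑ a ∈ S, u a χ • v a)).symm.trans ?_
    rw [sum_inner]
    refine Finset.sum_congr rfl fun a _ => ?_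
    rw [inner_sum]
    refine Finset.sum_congr rfl fun b _ => ?_
    rw [inner_smul_left, inner_smul_right]
    simp [mul_assoc]
  have h2 : ((∫ χ, ‖∑ a ∈ S, u a χ • v a‖ ^ 2 ∂(dualHaar N) : ℝ) : ℂ)
      = ((∑ a ∈ S, ‖v a‖ ^ 2 : ℝ) : ℂ) := by
    rw [← integral_complex_ofReal]
    simp only [key]
    rw [integral_finsetSum _ fun a _ => integrable_dual (by fun_prop)]
    push_cast
    refine Finset.sum_congr rfl fun a ha => ?_
    rw [integral_finsetSum _ fun a _ => integrable_dual (by fun_prop)]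
    simp only [integral_mul_const, hu]
    simp [ha]
  exact_mod_cast h2

lemma ev_orthonormal [DecidableEq N] (a b : N) :
    ∫ χ, star (ev a χ) * ev b χ ∂(dualHaar N) = if a = b then 1 else 0 := by
  have : ∀ χ, star (ev a χ) * ev b χ = ev (a⁻¹ * b) χ := fun χ => by rw [star_ev, ev_mul]
  simp only [this, integral_ev, inv_mul_eq_one]

lemma star_ev_orthonormal [DecidableEq N] (a b : N) :
    ∫ χ, star ((star (ev a)) χ) * (star (ev b)) χ ∂(dualHaar N) = if a = b then 1 else 0 := by
  have : ∀ χ, star ((star (ev a)) χ) * (star (ev b)) χ = ev (b⁻¹ * a) χ := fun χ => by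
    rw [ContinuousMap.star_apply, ContinuousMap.star_apply, star_star, star_ev, ev_mul, mul_comm]
  simp only [this, integral_ev, inv_mul_eq_one, eq_comm]

/-- The trigonometric polynomial on the dual group with the given coefficients. -/
def trig : (N →₀ ℂ) →ₗ[ℂ] C(PontryaginDual N, ℂ) := Finsupp.linearCombination ℂ ev

lemma trig_apply (p : N →₀ ℂ) (χ : PontryaginDual N) :
    trig p χ = ∑ a ∈ p.support, p a * ev a χ := by
  simp [trig, Finsupp.linearCombination_apply, Finsupp.sum]

lemma trig_apply_of_subset (p : N →₀ ℂ) {S : Finset N} (hS : p.support ⊆ S)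
    (χ : PontryaginDual N) : trig p χ = ∑ a ∈ S, p a * ev a χ := by
  rw [trig_apply]
  refine Finset.sum_subset hS fun a _ ha => ?_
  rw [Finsupp.notMem_support_iff.1 ha, zero_mul]

lemma trig_coeff_one (p : N →₀ ℂ) : ∫ χ, trig p χ ∂(dualHaar N) = p 1 := by
  classical
  simp only [trig_apply]
  rw [integral_finsetSum _ fun a _ => integrable_dual (by fun_prop)]
  simp only [integral_const_mul, integral_ev]
  simp +contextual [eq_comm]

lemma parseval (p : N →₀ ℂ) : ∫ χ, ‖trig p χ‖ ^ 2 ∂(dualHaar N) = ∑' a, ‖p a‖ ^ 2 := by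
  classical
  rw [tsum_eq_sum (s := p.support) fun a ha => by simp [Finsupp.notMem_support_iff.1 ha]]
  rw [← integral_norm_sq_sum ev ev_orthonormal]
  simp only [trig_apply, smul_eq_mul, mul_comm]

/-- The `L¹`-norm of a trigonometric polynomial on the dual group. -/
def nrm (p : N →₀ ℂ) : ℝ := ∫ χ, ‖trig p χ‖ ∂(dualHaar N)

lemma nrm_add_le (p q : N →₀ ℂ) : nrm (p + q) ≤ nrm p + nrm q := by
  unfold nrm
  rw [← integral_add (integrable_dual (by fun_prop)) (integrable_dual (by fun_prop))]
  refine integral_mono (integrable_dual (by fun_prop)) (integrable_dual (by fun_prop)) fun χ => ?_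
  simpa using norm_add_le (trig p χ) (trig q χ)

lemma norm_coeff_one_le (p : N →₀ ℂ) : ‖p 1‖ ≤ nrm p := by
  rw [← trig_coeff_one]
  exact norm_integral_le_integral_norm _

/-- The transpose of an automorphism, acting on the dual group. -/
def dualMap (e : N ≃* N) : PontryaginDual N →ₜ* PontryaginDual N :=
  PontryaginDual.map ⟨e.toMonoidHom, continuous_of_discreteTopology⟩

@[simp] lemma dualMap_apply (e : N ≃* N) (χ : PontryaginDual N) (a : N) :
    dualMap e χ a = χ (e a) := rfl

/-- Normalised Haar measure is preserved by uniqueness, `dualMap e` being onto. -/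
lemma measurePreserving_dualMap (e : N ≃* N) :
    MeasurePreserving (dualMap e) (dualHaar N) (dualHaar N) := by
  have hc : Continuous (dualMap e) := (dualMap e).continuous
  refine ⟨hc.measurable, ?_⟩
  have hs : Function.Surjective (dualMap e) := fun χ =>
    ⟨dualMap e.symm χ, by apply PontryaginDual.ext; intro a; simp⟩
  have := Measure.isHaarMeasure_map_of_isFiniteMeasure (dualHaar N) (dualMap e).toMonoidHom hc hs
  have hp : IsProbabilityMeasure ((dualHaar N).map (dualMap e)) :=
    Measure.isProbabilityMeasure_map hc.aemeasurable
  exact @Measure.isHaarMeasure_eq_of_isProbabilityMeasure _ _ _ _ _ _ _ _ _ _ hp _ this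

/-- Transport of coefficients along an automorphism: `(twist e p) (e a) = p a`. -/
def twist (e : N ≃* N) (p : N →₀ ℂ) : N →₀ ℂ := p.equivMapDomain e.toEquiv

@[simp] lemma twist_apply (e : N ≃* N) (p : N →₀ ℂ) (a : N) : twist e p a = p (e.symm a) := rfl

lemma trig_twist (e : N ≃* N) (p : N →₀ ℂ) (χ : PontryaginDual N) :
    trig (twist e p) χ = trig p (dualMap e χ) := by
  classical
  rw [trig_apply_of_subset (twist e p) (S := p.support.map e.toEquiv.toEmbedding) ?_, trig_apply]
  · simp
  · intro a ha
    simp only [Finsupp.mem_support_iff, twist_apply] at ha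
    simp only [Finset.mem_map_equiv, Finsupp.mem_support_iff]
    exact ha

lemma nrm_twist (e : N ≃* N) (p : N →₀ ℂ) : nrm (twist e p) = nrm p := by
  unfold nrm
  simp only [trig_twist]
  have h := measurePreserving_dualMap e
  have := integral_map (μ := dualHaar N) (φ := dualMap e) (f := fun χ => ‖trig p χ‖)
    h.measurable.aemeasurable (by
      refine Continuous.aestronglyMeasurable ?_
      fun_prop)
  rw [h.map_eq] at this
  exact this.symm

/-- Trigonometric polynomials are uniformly dense, by the Stone–Weierstrass theorem. -/
lemma dense_trig (h : C(PontryaginDual N, ℂ)) {δ : ℝ} (hδ : 0 < δ) :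
    ∃ p : N →₀ ℂ, ∀ χ, ‖trig p χ - h χ‖ ≤ δ := by
  let A : StarSubalgebra ℂ C(PontryaginDual N, ℂ) :=
    { toSubalgebra := Algebra.adjoin ℂ (Set.range ev)
      star_mem' := by
        change Algebra.adjoin ℂ (Set.range ev) ≤ star (Algebra.adjoin ℂ (Set.range ev))
        refine Algebra.adjoin_le ?_
        rintro _ ⟨n, rfl⟩
        refine Algebra.subset_adjoin ⟨n⁻¹, ?_⟩
        ext1 χ
        rw [← star_ev]; rfl }
  have hspan : A.toSubalgebra.toSubmodule = Submodule.span ℂ (Set.range ev) := by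
    apply Algebra.adjoin_eq_span_of_subset
    refine .trans (fun x ↦ Submonoid.closure_induction (fun _ ↦ id) ⟨1, ?_⟩ ?_)
      Submodule.subset_span
    · ext z; simp
    · rintro _ _ _ _ ⟨m, rfl⟩ ⟨n, rfl⟩
      refine ⟨m * n, ?_⟩
      ext z; exact ev_mul _ _ _
  have hsep : A.SeparatesPoints := by
    intro x y hxy
    have : ∃ a, x a ≠ y a := by
      by_contra! hh
      exact hxy (PontryaginDual.ext hh)
    obtain ⟨a, ha⟩ := this
    refine ⟨_, ⟨ev a, Algebra.subset_adjoin ⟨a, rfl⟩, rfl⟩, ?_⟩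
    exact fun h => ha (Circle.coe_injective h)
  have htop := ContinuousMap.starSubalgebra_topologicalClosure_eq_top_of_separatesPoints A hsep
  have hmem : h ∈ A.topologicalClosure := by rw [htop]; trivial
  have hmem' : h ∈ closure (A : Set C(PontryaginDual N, ℂ)) := hmem
  obtain ⟨f, hf, hfd⟩ := Metric.mem_closure_iff.1 hmem' δ hδ
  have hf2 : f ∈ Submodule.span ℂ (Set.range (ev (N := N))) := by
    rw [← hspan]; exact hf
  rw [← Finsupp.range_linearCombination] at hf2
  obtain ⟨p, hp⟩ := hf2
  refine ⟨p, fun χ => ?_⟩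
  have : trig p = f := hp
  rw [this, ← dist_eq_norm, dist_comm]
  exact (ContinuousMap.dist_apply_le_dist χ).trans hfd.le

end Dual

/-! ### Følner sets and mean-square Herz–Schur bounds -/

section Foelner

variable {N : Type*} [CommGroup N]

open Classical in
/-- Abelian groups satisfy the Følner condition: the balls generated by a finite set grow
polynomially, so two consecutive ones have nearly the same cardinality. -/
lemma exists_foelner (T : Finset N) {ε : ℝ} (hε : 0 < ε) :
    ∃ S : Finset N, S.Nonempty ∧
      ∀ a ∈ T, ((S.filter fun b => b * a ∉ S).card : ℝ) ≤ ε * S.card := by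
  -- `B n` is the set of products of powers `< n` of the elements of `T`
  let B : ℕ → Finset N := fun n =>
    (Fintype.piFinset fun _ : T => Finset.range n).image fun k => ∏ x : T, (x : N) ^ k x
  have hmono : ∀ n, B n ⊆ B (n + 1) := fun n => by
    refine Finset.image_subset_image (Fintype.piFinset_subset _ _ fun _ => ?_)
    exact Finset.range_mono (Nat.le_succ n)
  have hmul : ∀ n, ∀ a ∈ T, ∀ b ∈ B n, b * a ∈ B (n + 1) := by
    intro n a ha b hb
    obtain ⟨k, hk, rfl⟩ := Finset.mem_image.1 hb
    refine Finset.mem_image.2 ⟨k + Pi.single ⟨a, ha⟩ 1, ?_, ?_⟩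
    · simp only [Fintype.mem_piFinset, Finset.mem_range] at hk ⊢
      intro x
      have := hk x
      by_cases hx : x = ⟨a, ha⟩
      · subst hx; simp; omega
      · simp [hx]; omega
    · simp only [Pi.add_apply, pow_add, Finset.prod_mul_distrib]
      congr 1
      rw [Finset.prod_eq_single ⟨a, ha⟩] <;> simp +contextual
  have hne : ∀ n, (B (n + 1)).Nonempty := fun n =>
    ⟨1, Finset.mem_image.2 ⟨0, by simp, by simp⟩⟩
  have hcard : ∀ n, ((B n).card : ℝ) ≤ (n : ℝ) ^ T.card := fun n => by
    have : (B n).card ≤ n ^ T.card := Finset.card_image_le.trans (by simp)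
    exact_mod_cast this
  -- polynomial growth excludes exponential growth
  have hex : ∃ n, ((B (n + 2)).card : ℝ) ≤ (1 + ε) * (B (n + 1)).card := by
    by_contra! hcon
    have hexp : ∀ n, (1 + ε) ^ n ≤ ((B (n + 1)).card : ℝ) := by
      intro n
      induction n with
      | zero => simpa using (hne 0).card_pos
      | succ n ih =>
        rw [pow_succ']
        exact (mul_le_mul_of_nonneg_left ih (by positivity)).trans (hcon n).le
    have ht := tendsto_pow_const_div_const_pow_of_one_lt T.card (r := 1 + ε) (by linarith)
    have hlt := ht.eventually (gt_mem_nhds (show (0 : ℝ) < (1 + ε)⁻¹ by positivity))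
    obtain ⟨n, hn, hn1⟩ := (hlt.and (eventually_ge_atTop 1)).exists
    obtain ⟨m, rfl⟩ : ∃ m, n = m + 1 := ⟨n - 1, by omega⟩
    rw [div_lt_iff₀ (by positivity), pow_succ', inv_mul_cancel_left₀ (by positivity)] at hn
    exact absurd ((hexp m).trans (hcard (m + 1))) (not_le.2 hn)
  obtain ⟨n, hn⟩ := hex
  refine ⟨B (n + 1), hne n, fun a ha => ?_⟩
  have h1 : ((B (n + 1)).filter fun b => b * a ∉ B (n + 1)).card
      ≤ (B (n + 2) \ B (n + 1)).card := by
    refine Finset.card_le_card_of_injOn (fun b => b * a) ?_ (mul_left_injective a).injOn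
    intro b hb
    simp only [Finset.coe_filter, Set.mem_ofPred_eq] at hb
    simp only [Finset.coe_sdiff, Set.mem_sdiff, Finset.mem_coe]
    exact ⟨hmul _ a ha b hb.1, hb.2⟩
  have h2 := Finset.card_sdiff_add_card_eq_card (hmono (n + 1))
  have h3 : (((B (n + 1)).filter fun b => b * a ∉ B (n + 1)).card : ℝ) + (B (n + 1)).card
      ≤ (B (n + 2)).card := by
    rw [← h2]; push_cast; gcongr
  linarith

open Classical in
/-- A family of nonempty finite sets which is asymptotically translation invariant along an
ultrafilter. -/
def IsFoelnerAlong {I : Type*} (U : Ultrafilter I) (S : I → Finset N) : Prop :=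
  (∀ i, (S i).Nonempty) ∧ ∀ a, ∀ ε : ℝ, 0 < ε →
    ∀ᶠ i in (U : Filter I), (((S i).filter fun b => b * a ∉ S i).card : ℝ) ≤ ε * (S i).card

lemma exists_isFoelnerAlong (N : Type*) [CommGroup N] :
    ∃ (U : Ultrafilter (Finset N × ℕ)) (S : Finset N × ℕ → Finset N), IsFoelnerAlong U S := by
  classical
  choose S hne hS using fun i : Finset N × ℕ =>
    exists_foelner i.1 (ε := 1 / ((i.2 : ℝ) + 1)) (by positivity)
  refine ⟨Ultrafilter.of atTop, S, hne, fun a ε hε => ?_⟩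
  refine Ultrafilter.of_le atTop ?_
  obtain ⟨n, hn⟩ := exists_nat_one_div_lt hε
  filter_upwards [eventually_ge_atTop (({a} : Finset N), n)] with i hi
  refine (hS i a (hi.1 (by simp))).trans ?_
  have : 1 / ((i.2 : ℝ) + 1) ≤ 1 / ((n : ℝ) + 1) := by
    have : (n : ℝ) ≤ i.2 := by exact_mod_cast hi.2
    gcongr
  gcongr
  linarith

variable [TopologicalSpace N] [DiscreteTopology N]

/-- A Herz–Schur bound whose two factors are only controlled in mean square along Følner sets
bounds the `L¹`-norm of the Fourier transform on the dual group. With `X` and `Y` the Fourier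
transforms of `v` and `w` restricted to a Følner set `E`, the function `⟪X, Y⟫` is close to
`|E| · trig ψ`, and Parseval's identity controls its `L¹`-norm. The parameter `κ` is the weight in
the arithmetic-geometric mean inequality. -/
lemma nrm_le {I : Type*} {U : Ultrafilter I} {S : I → Finset N} (hS : IsFoelnerAlong U S)
    {H : Type*} [NormedAddCommGroup H] [InnerProductSpace ℂ H] (ψ : N →₀ ℂ) (v w : N → H)
    (hψ : ∀ a b, ψ (b⁻¹ * a) = ⟪v a, w b⟫_ℂ) {A B κ : ℝ} (hκ : 0 < κ)
    (hA : ∀ᶠ i in (U : Filter I), ∑ c ∈ S i, ‖v c‖ ^ 2 ≤ A * (S i).card)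
    (hB : ∀ᶠ i in (U : Filter I), ∑ c ∈ S i, ‖w c‖ ^ 2 ≤ B * (S i).card) :
    nrm ψ ≤ (κ⁻¹ * A + κ * B) / 2 := by
  classical
  refine le_of_forall_pos_le_add fun ε hε => ?_
  set M : ℝ := ∑ c ∈ ψ.support, ‖ψ c‖ with hM
  have hM0 : 0 ≤ M := Finset.sum_nonneg fun _ _ => norm_nonneg _
  have hF : ∀ᶠ i in (U : Filter I), ∀ a ∈ ψ.support,
      (((S i).filter fun b => b * a ∉ S i).card : ℝ) ≤ ε / (M + 1) * (S i).card :=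
    (Filter.eventually_all_finset _).2 fun a _ => hS.2 a _ (by positivity)
  obtain ⟨i, hi1, hi2, hi3⟩ := (hA.and (hB.and hF)).exists
  have hpos : (0 : ℝ) < (S i).card := by exact_mod_cast (hS.1 i).card_pos
  generalize S i = E at *
  let X : PontryaginDual N → H := fun χ => ∑ a ∈ E, (star (ev a)) χ • v a
  let Y : PontryaginDual N → H := fun χ => ∑ a ∈ E, (star (ev a)) χ • w a
  have hXc : Continuous X := by fun_prop
  have hYc : Continuous Y := by fun_prop
  have hX : ∫ χ, ‖X χ‖ ^ 2 ∂(dualHaar N) = ∑ a ∈ E, ‖v a‖ ^ 2 :=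
    integral_norm_sq_sum (fun a => star (ev a)) star_ev_orthonormal E v
  have hY : ∫ χ, ‖Y χ‖ ^ 2 ∂(dualHaar N) = ∑ a ∈ E, ‖w a‖ ^ 2 :=
    integral_norm_sq_sum (fun a => star (ev a)) star_ev_orthonormal E w
  have hXY : ∀ χ, ⟪X χ, Y χ⟫_ℂ
      = ∑ c ∈ ψ.support, ((E.filter fun b => b * c ∈ E).card : ℂ) * (ψ c * ev c χ) := by
    intro χ
    have h1 : ⟪X χ, Y χ⟫_ℂ = ∑ b ∈ E, ∑ a ∈ E, ψ (b⁻¹ * a) * ev (b⁻¹ * a) χ := by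
      simp only [X, Y]
      rw [inner_sum]
      refine Finset.sum_congr rfl fun b _ => ?_
      rw [sum_inner]
      refine Finset.sum_congr rfl fun a _ => ?_
      rw [inner_smul_left, inner_smul_right, hψ, ev_mul, ← star_ev]
      simp only [ContinuousMap.star_apply, RCLike.star_def, Complex.conj_conj]
      ring
    have h2 : ∀ b ∈ E, ∑ a ∈ E, ψ (b⁻¹ * a) * ev (b⁻¹ * a) χ
        = ∑ c ∈ ψ.support, if b * c ∈ E then ψ c * ev c χ else 0 := by
      intro b _
      rw [← Finset.sum_filter]
      have : ∑ a ∈ E, ψ (b⁻¹ * a) * ev (b⁻¹ * a) χ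
          = ∑ a ∈ E.filter (fun a => b⁻¹ * a ∈ ψ.support), ψ (b⁻¹ * a) * ev (b⁻¹ * a) χ := by
        refine (Finset.sum_filter_of_ne fun a _ h => ?_).symm
        rw [Finsupp.mem_support_iff]
        exact left_ne_zero_of_mul h
      rw [this]
      refine Finset.sum_nbij' (fun a => b⁻¹ * a) (fun c => b * c) ?_ ?_ ?_ ?_ ?_
      · intro a ha; simpa [and_comm] using ha
      · intro c hc; simpa [and_comm] using hc
      · intro a _; simp
      · intro a _; simp
      · intro a _; rfl
    rw [h1, Finset.sum_congr rfl h2, Finset.sum_comm]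
    refine Finset.sum_congr rfl fun c _ => ?_
    rw [← Finset.sum_filter, Finset.sum_const, nsmul_eq_mul]
  have hpt : ∀ χ, (E.card : ℝ) * ‖trig ψ χ‖
      ≤ (κ⁻¹ * ‖X χ‖ ^ 2 + κ * ‖Y χ‖ ^ 2) / 2 + ε * E.card := by
    intro χ
    have h1 : (E.card : ℂ) * trig ψ χ = ⟪X χ, Y χ⟫_ℂ
        + ∑ c ∈ ψ.support, ((E.filter fun b => b * c ∉ E).card : ℂ) * (ψ c * ev c χ) := by
      rw [hXY, trig_apply, Finset.mul_sum, ← Finset.sum_add_distrib]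
      refine Finset.sum_congr rfl fun c _ => ?_
      rw [← add_mul]
      congr 1
      exact_mod_cast (Finset.card_filter_add_card_filter_not (s := E) (fun b => b * c ∈ E)).symm
    have h2 : ‖∑ c ∈ ψ.support, ((E.filter fun b => b * c ∉ E).card : ℂ) * (ψ c * ev c χ)‖
        ≤ ε * E.card := by
      calc _ ≤ ∑ c ∈ ψ.support, ε / (M + 1) * E.card * ‖ψ c‖ := by
            refine norm_sum_le_of_le _ fun c hc => ?_
            rw [norm_mul, norm_mul, norm_ev, mul_one, Complex.norm_natCast]
            exact mul_le_mul_of_nonneg_right (hi3 c hc) (norm_nonneg _)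
        _ = ε * E.card * (M / (M + 1)) := by rw [← Finset.mul_sum, ← hM]; ring
        _ ≤ ε * E.card * 1 := by
            have : M / (M + 1) ≤ 1 := by rw [div_le_one (by positivity)]; linarith
            gcongr
        _ = _ := mul_one _
    have h3 : ‖⟪X χ, Y χ⟫_ℂ‖ ≤ (κ⁻¹ * ‖X χ‖ ^ 2 + κ * ‖Y χ‖ ^ 2) / 2 := by
      refine (norm_inner_le_norm _ _).trans ?_
      have h4 : (κ⁻¹ * ‖X χ‖ ^ 2 + κ * ‖Y χ‖ ^ 2) / 2 - ‖X χ‖ * ‖Y χ‖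
          = κ⁻¹ * (‖X χ‖ - κ * ‖Y χ‖) ^ 2 / 2 := by field_simp; ring
      have h5 : 0 ≤ κ⁻¹ * (‖X χ‖ - κ * ‖Y χ‖) ^ 2 / 2 := by positivity
      linarith
    calc (E.card : ℝ) * ‖trig ψ χ‖ = ‖(E.card : ℂ) * trig ψ χ‖ := by
          rw [norm_mul, Complex.norm_natCast]
      _ ≤ _ := by rw [h1]; exact (norm_add_le _ _).trans (add_le_add h3 h2)
  have hintg : (E.card : ℝ) * nrm ψ
      ≤ (κ⁻¹ * ∑ a ∈ E, ‖v a‖ ^ 2 + κ * ∑ a ∈ E, ‖w a‖ ^ 2) / 2 + ε * E.card := by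
    unfold nrm
    rw [← integral_const_mul, ← hX, ← hY, ← integral_const_mul, ← integral_const_mul,
      ← integral_add (integrable_dual (by fun_prop)) (integrable_dual (by fun_prop)),
      ← integral_div]
    refine (integral_mono (integrable_dual (by fun_prop)) (integrable_dual (by fun_prop))
      hpt).trans (le_of_eq ?_)
    rw [integral_add (integrable_dual (by fun_prop)) (integrable_dual (by fun_prop))]
    simp
  have hfin : (E.card : ℝ) * nrm ψ ≤ E.card * ((κ⁻¹ * A + κ * B) / 2 + ε) := by
    refine hintg.trans ?_
    have h1 : κ⁻¹ * ∑ a ∈ E, ‖v a‖ ^ 2 ≤ κ⁻¹ * (A * E.card) := by gcongr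
    have h2 : κ * ∑ a ∈ E, ‖w a‖ ^ 2 ≤ κ * (B * E.card) := by gcongr
    linarith
  exact le_of_mul_le_mul_left hfin hpos

end Foelner

/-! ### Optimal approximating multipliers -/

section Good

variable {G N I : Type*} [Group G] [CommGroup N] (ι : N →* G) (U : Ultrafilter I)
  (S : I → Finset N)

/-- The mean square of `ξ` over the coset of `t`, along the sets `S i`, is at most `D`. -/
def AvgLE {H : Type} [NormedAddCommGroup H] (ξ : G → H) (D : ℝ) : Prop :=
  ∀ t, ∀ᶠ i in (U : Filter I), ∑ c ∈ S i, ‖ξ (ι c * t)‖ ^ 2 ≤ D * (S i).card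

/-- A variant of weak amenability in which suprema of norms are replaced by mean squares over
cosets of `ι N`; the kernel `ξ` is normalised to have mean square at most `1`. -/
def Good (D : ℝ) : Prop :=
  ∀ (F : Finset G) (ε : ℝ), 0 < ε →
    ∃ φ : G → ℂ, (Function.support φ).Finite ∧ (∀ s ∈ F, ‖φ s - 1‖ ≤ ε) ∧
      ∃ (H : Type) (_ : NormedAddCommGroup H) (_ : InnerProductSpace ℂ H) (ξ η : G → H),
        AvgLE ι U S ξ 1 ∧ AvgLE ι U S η D ∧ ∀ s t : G, φ (s⁻¹ * t) = ⟪ξ t, η s⟫_ℂ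

variable {ι U S}

lemma AvgLE.smul {H : Type} [NormedAddCommGroup H] [InnerProductSpace ℂ H] {ξ : G → H} {D : ℝ}
    (h : AvgLE ι U S ξ D) (c : ℝ) : AvgLE ι U S (fun t => (c : ℂ) • ξ t) (c ^ 2 * D) := by
  intro t
  filter_upwards [h t] with i hi
  simp only [norm_smul, mul_pow, ← Finset.mul_sum, Complex.norm_real, Real.norm_eq_abs, sq_abs,
    mul_assoc]
  gcongr

lemma avgLE_of_le {H : Type} [NormedAddCommGroup H] {ξ : G → H} {A : ℝ}
    (h : ∀ t, ‖ξ t‖ ≤ A) : AvgLE ι U S ξ (A ^ 2) := by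
  intro t
  refine Eventually.of_forall fun i => ?_
  calc ∑ c ∈ S i, ‖ξ (ι c * t)‖ ^ 2 ≤ ∑ c ∈ S i, A ^ 2 := by
        gcongr; exact h _
    _ = _ := by simp [mul_comm]

/-- Rescaling the two kernels by `A⁻¹` and `A` normalises the first one. -/
lemma WeaklyAmenableWithConst.good {C : ℝ} (h : WeaklyAmenableWithConst G C) :
    Good ι U S (C ^ 2) := by
  intro F ε hε
  obtain ⟨φ, hfin, hF, H, i1, i2, -, ξ, η, A, B, hA, hB, hξ, hη, hAB, hφ⟩ := h F ε hε
  refine ⟨φ, hfin, hF, H, i1, i2, ?_⟩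
  have hC : (A * B) ^ 2 ≤ C ^ 2 := by gcongr
  rcases hA.eq_or_lt with rfl | hA
  · have h0 : ∀ t, ξ t = 0 := fun t => norm_le_zero_iff.1 (hξ t)
    refine ⟨fun _ => 0, fun _ => 0, fun t => ?_, fun t => ?_, fun s t => ?_⟩
    · exact Eventually.of_forall fun i => by simp
    · exact Eventually.of_forall fun i => by simp; positivity
    · rw [hφ, h0]; simp
  · refine ⟨fun t => ((A⁻¹ : ℝ) : ℂ) • ξ t, fun t => ((A : ℝ) : ℂ) • η t, ?_, ?_, fun s t => ?_⟩
    · have := (avgLE_of_le (ι := ι) (U := U) (S := S) hξ).smul A⁻¹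
      rwa [inv_pow, inv_mul_cancel₀ (by positivity)] at this
    · intro t
      have := (avgLE_of_le (ι := ι) (U := U) (S := S) hη).smul A t
      filter_upwards [this] with i hi
      refine hi.trans ?_
      rw [← mul_pow]
      gcongr
    · rw [hφ, inner_smul_left, inner_smul_right, Complex.conj_ofReal, ← mul_assoc]
      rw [← Complex.ofReal_mul, inv_mul_cancel₀ hA.ne']
      simp

/-- Admissible constants are bounded away from zero, because `φ 1 = ⟪ξ t, η t⟫` is close to `1`. -/
lemma Good.le [DecidableEq N] (hS : IsFoelnerAlong U S) {D : ℝ} (h : Good ι U S D) :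
    1 / 4 ≤ D := by
  obtain ⟨φ, -, hF, H, i1, i2, ξ, η, hξ, hη, hφ⟩ := h {1} (1 / 2) (by norm_num)
  have h1 : 1 / 2 ≤ ‖φ 1‖ := by
    have h2 := hF 1 (by simp)
    have h3 := norm_sub_norm_le (1 : ℂ) (1 - φ 1)
    rw [sub_sub_cancel, norm_one, norm_sub_rev] at h3
    linarith
  obtain ⟨i, hi1, hi2⟩ := ((hξ 1).and (hη 1)).exists
  have hpos : (0 : ℝ) < (S i).card := by exact_mod_cast (hS.1 i).card_pos
  simp only [mul_one, one_mul] at hi1 hi2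
  have h4 : ∀ c : N, ‖φ 1‖ ≤ ‖ξ (ι c)‖ ^ 2 / 4 + ‖η (ι c)‖ ^ 2 := fun c => by
    have := hφ (ι c) (ι c)
    rw [inv_mul_cancel] at this
    rw [this]
    refine (norm_inner_le_norm _ _).trans ?_
    nlinarith [sq_nonneg (‖ξ (ι c)‖ / 2 - ‖η (ι c)‖)]
  have h5 : (S i).card * (1 / 2 : ℝ) ≤ (S i).card * (1 / 4 + D) := by
    calc (S i).card * (1 / 2 : ℝ) ≤ ∑ c ∈ S i, ‖φ 1‖ := by
          rw [Finset.sum_const, nsmul_eq_mul]; gcongr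
      _ ≤ ∑ c ∈ S i, (‖ξ (ι c)‖ ^ 2 / 4 + ‖η (ι c)‖ ^ 2) := Finset.sum_le_sum fun c _ => h4 c
      _ ≤ _ := by
          rw [Finset.sum_add_distrib, ← Finset.sum_div]
          linarith
  have := le_of_mul_le_mul_left h5 hpos
  linarith

/-- A constant which is optimal up to the factor `1 - κ`. -/
lemma Good.exists_optimal [DecidableEq N] (hS : IsFoelnerAlong U S) {C κ : ℝ}
    (h : Good ι U S C) (hκ : 0 < κ) (hκ1 : κ < 1) :
    ∃ D, 0 ≤ D ∧ D ≤ C ∧ Good ι U S D ∧ ¬ Good ι U S ((1 - κ) * D) := by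
  by_contra! hcon
  have hC := h.le hS
  have key : ∀ n : ℕ, Good ι U S ((1 - κ) ^ n * C) := by
    intro n
    induction n with
    | zero => simpa using h
    | succ n ih =>
      rw [pow_succ', mul_assoc]
      refine hcon _ (by linarith [ih.le hS]) ?_ ih
      exact mul_le_of_le_one_left (by linarith) (pow_le_one₀ (by linarith) (by linarith))
  have ht : Tendsto (fun n : ℕ => (1 - κ) ^ n * C) atTop (nhds 0) := by
    simpa using (tendsto_pow_atTop_nhds_zero_of_lt_one (r := 1 - κ) (by linarith)
      (by linarith)).mul_const C
  obtain ⟨n, hn⟩ := (ht.eventually (gt_mem_nhds (show (0 : ℝ) < 1 / 4 by norm_num))).exists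
  exact absurd ((key n).le hS) (not_le.2 hn)

/-- If averaging a kernel with its right translate by `g` does not decrease its mean square, then
the kernel nearly agrees with its translate on some coset, by the parallelogram law. -/
lemma exists_coset {H : Type} [NormedAddCommGroup H] [InnerProductSpace ℂ H] {ξ : G → H}
    {A κ : ℝ} (h : AvgLE ι U S ξ A) (g : G)
    (hn : ¬ AvgLE ι U S (fun t => (2⁻¹ : ℂ) • (ξ t + ξ (t * g))) ((1 - κ) * A)) :
    ∃ t, ∀ᶠ i in (U : Filter I),
      ∑ c ∈ S i, ‖ξ (ι c * t * g) - ξ (ι c * t)‖ ^ 2 ≤ 4 * κ * A * (S i).card := by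
  unfold AvgLE at hn
  push Not at hn
  obtain ⟨t, ht⟩ := hn
  refine ⟨t, ?_⟩
  filter_upwards [ht, h t, h (t * g)] with i h1 h2 h3
  have hpar : ∀ x y : H, ‖y - x‖ ^ 2
      = 2 * ‖x‖ ^ 2 + 2 * ‖y‖ ^ 2 - 4 * ‖(2⁻¹ : ℂ) • (x + y)‖ ^ 2 := by
    intro x y
    have := parallelogram_law_with_norm ℂ x y
    rw [norm_smul, norm_sub_rev y x]
    norm_num
    nlinarith
  simp only [hpar, mul_assoc, Finset.sum_sub_distrib, Finset.sum_add_distrib,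
    ← Finset.mul_sum] at h1 h2 h3 ⊢
  linarith

variable [TopologicalSpace N] [DiscreteTopology N]

/-- Translation of coefficients: `(shift a₀ p) a = p (a * a₀)`. -/
def shift (a₀ : N) (p : N →₀ ℂ) : N →₀ ℂ := p.equivMapDomain (Equiv.mulRight a₀⁻¹)

@[simp] lemma shift_apply (a₀ : N) (p : N →₀ ℂ) (a : N) : shift a₀ p a = p (a * a₀) := by
  simp [shift]

/-- An optimal approximating multiplier `φ` nearly agrees on `N`, in the norm `nrm`, with each of
its left and right translates by elements of `F`: otherwise its average with such a translate would
be an approximating multiplier with a strictly better constant. Combining a left and a right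
translation gives near invariance under conjugation. -/
lemma near_invariant (hS : IsFoelnerAlong U S) (hι : Function.Injective ι)
    (α : G →* MulAut N) (hα : ∀ g a, ι (α g a) = g * ι a * g⁻¹) {C : ℝ} (h : Good ι U S C)
    (F : Finset G) {r : ℝ} (hr : 0 < r) (hr1 : r < 1) :
    ∃ f : N →₀ ℂ, 1 / 2 ≤ ‖f 1‖ ∧ (∀ g ∈ F, nrm (twist (α g) f - f) ≤ 2 * (r * (2 + 2 * C))) ∧
      ∀ a, ι a ∈ F → nrm (shift a f - f) ≤ r * (2 + 2 * C) := by
  classical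
  obtain ⟨D, hD0, hDC, hD, hnD⟩ := h.exists_optimal hS (κ := r ^ 2) (by positivity)
    (by nlinarith)
  have hκ1 : 0 < 1 - r ^ 2 := by nlinarith
  unfold Good at hnD
  simp only [not_forall] at hnD
  obtain ⟨F₁, ε₁, hε₁, hnot⟩ := hnD
  obtain ⟨φ, hfin, hF, H, i1, i2, ξ, η, hξ, hη, hφ⟩ :=
    hD ({1} ∪ F₁ ∪ F.biUnion (fun g => F₁.image (fun x => x * g) ∪ F₁.image (fun x => g * x)))
      (min ε₁ (1 / 2)) (by positivity)
  have hfinR : ∀ g : G, (Function.support fun x => φ (x * g)).Finite := fun g =>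
    hfin.preimage (mul_left_injective g).injOn
  have hfinL : ∀ g : G, (Function.support fun x => φ (g * x)).Finite := fun g =>
    hfin.preimage (mul_right_injective g).injOn
  have hfinN : ∀ {ψ : G → ℂ}, (Function.support ψ).Finite →
      (Function.support fun a => ψ (ι a)).Finite := fun hψ => hψ.preimage hι.injOn
  let f : N →₀ ℂ := Finsupp.ofSupportFinite _ (hfinN hfin)
  let R : G → N →₀ ℂ := fun g => Finsupp.ofSupportFinite _ (hfinN (hfinR g))
  let L : G → N →₀ ℂ := fun g => Finsupp.ofSupportFinite _ (hfinN (hfinL g))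
  have hf : ∀ a, f a = φ (ι a) := fun a => rfl
  have hR : ∀ g a, R g a = φ (ι a * g) := fun g a => rfl
  have hL : ∀ g a, L g a = φ (g * ι a) := fun g a => rfl
  have hsymm : ∀ g a, ι ((α g).symm a) = g⁻¹ * ι a * g := fun g a => by
    have := hα g ((α g).symm a)
    rw [MulEquiv.apply_symm_apply] at this
    rw [this]; group
  -- midpoints of values close to `1` are close to `1`
  have hmid : ∀ x y : ℂ, ‖x - 1‖ ≤ ε₁ → ‖y - 1‖ ≤ ε₁ → ‖2⁻¹ * (x + y) - 1‖ ≤ ε₁ := by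
    intro x y hx hy
    have : 2⁻¹ * (x + y) - 1 = 2⁻¹ * ((x - 1) + (y - 1)) := by ring
    rw [this, norm_mul]
    have := norm_add_le (x - 1) (y - 1)
    norm_num
    linarith
  have hright : ∀ g ∈ F, nrm (R g - f) ≤ r * (2 + 2 * C) := by
    intro g hg
    have hn : ¬ AvgLE ι U S (fun t => (2⁻¹ : ℂ) • (ξ t + ξ (t * g))) ((1 - r ^ 2) * 1) := by
      intro hA
      -- averaging shrinks `ξ`; rescaling moves the gain from `ξ` to `η`
      set c : ℝ := Real.sqrt (1 - r ^ 2) with hc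
      have hc0 : 0 < c := Real.sqrt_pos.2 hκ1
      have hc2 : c ^ 2 = 1 - r ^ 2 := Real.sq_sqrt hκ1.le
      refine hnot ⟨fun x => 2⁻¹ * (φ x + φ (x * g)), ?_, ?_, H, i1, i2,
        fun t => ((c⁻¹ : ℝ) : ℂ) • ((2⁻¹ : ℂ) • (ξ t + ξ (t * g))),
        fun s => ((c : ℝ) : ℂ) • η s, ?_, ?_, ?_⟩
      · refine (hfin.union (hfinR g)).subset fun x hx => ?_
        by_contra hx'
        simp only [Set.mem_union, Function.mem_support, not_or, not_not] at hx'
        exact hx (by simp [hx'.1, hx'.2])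
      · intro s hs
        refine hmid _ _ ((hF s ?_).trans (min_le_left _ _)) ((hF _ ?_).trans (min_le_left _ _))
        · simp [hs]
        · exact Finset.mem_union_right _ (Finset.mem_biUnion.2 ⟨g, hg, Finset.mem_union_left _
            (Finset.mem_image_of_mem _ hs)⟩)
      · have := hA.smul c⁻¹
        rwa [mul_one, inv_pow, hc2, inv_mul_cancel₀ hκ1.ne'] at this
      · have := hη.smul c
        rwa [hc2] at this
      · intro s t
        rw [inner_smul_left, inner_smul_right, inner_smul_left, inner_add_left, ← hφ, ← hφ,
          Complex.conj_ofReal, Complex.ofReal_inv]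
        have : (c : ℂ) ≠ 0 := by exact_mod_cast hc0.ne'
        have h2 : (starRingEnd ℂ) (2⁻¹ : ℂ) = 2⁻¹ := by
          rw [map_inv₀]; congr 1; exact Complex.conj_ofNat 2
        rw [h2]
        change 2⁻¹ * (φ (s⁻¹ * t) + φ (s⁻¹ * t * g)) = _
        rw [mul_assoc s⁻¹]
        field_simp
    obtain ⟨t, ht⟩ := exists_coset hξ g hn
    have := nrm_le hS (twist (α t) (R g - f)) (fun a => ξ (ι a * t * g) - ξ (ι a * t))
      (fun a => η (ι a * t)) ?_ (A := 4 * r ^ 2 * 1) (B := D) (κ := r) hr ht (hη t)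
    · rw [nrm_twist] at this
      refine this.trans ?_
      have h1 : r⁻¹ * (4 * r ^ 2 * 1) = 4 * r := by field_simp
      rw [h1]
      nlinarith
    · intro a b
      rw [inner_sub_left, ← hφ, ← hφ, twist_apply, Finsupp.sub_apply, hR, hf]
      change φ (ι ((α t).symm (b⁻¹ * a)) * g) - φ (ι ((α t).symm (b⁻¹ * a))) = _
      rw [hsymm, map_mul, map_inv]
      congr 2 <;> group
  have hleft : ∀ g ∈ F, nrm (L g - f) ≤ r * (2 + 2 * C) := by
    intro g hg
    have hn : ¬ AvgLE ι U S (fun t => (2⁻¹ : ℂ) • (η t + η (t * g⁻¹))) ((1 - r ^ 2) * D) := by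
      intro hA
      refine hnot ⟨fun x => 2⁻¹ * (φ x + φ (g * x)), ?_, ?_, H, i1, i2, ξ,
        fun s => (2⁻¹ : ℂ) • (η s + η (s * g⁻¹)), hξ, hA, ?_⟩
      · refine (hfin.union (hfinL g)).subset fun x hx => ?_
        by_contra hx'
        simp only [Set.mem_union, Function.mem_support, not_or, not_not] at hx'
        exact hx (by simp [hx'.1, hx'.2])
      · intro s hs
        refine hmid _ _ ((hF s ?_).trans (min_le_left _ _)) ((hF _ ?_).trans (min_le_left _ _))
        · simp [hs]
        · exact Finset.mem_union_right _ (Finset.mem_biUnion.2 ⟨g, hg, Finset.mem_union_right _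
            (Finset.mem_image_of_mem _ hs)⟩)
      · intro s t
        rw [inner_smul_right, inner_add_right, ← hφ, ← hφ, mul_inv_rev, inv_inv, mul_assoc]
    obtain ⟨t, ht⟩ := exists_coset hη g⁻¹ hn
    have := nrm_le hS (twist (α t) (L g - f)) (fun a => ξ (ι a * t))
      (fun a => η (ι a * t * g⁻¹) - η (ι a * t)) ?_ (A := 1) (B := 4 * r ^ 2 * D) (κ := r⁻¹)
      (by positivity) (hξ t) ht
    · rw [nrm_twist] at this
      refine this.trans ?_
      have h1 : r⁻¹ * (4 * r ^ 2 * D) = 4 * r * D := by field_simp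
      rw [h1, inv_inv]
      nlinarith
    · intro a b
      rw [inner_sub_right, ← hφ, ← hφ, twist_apply, Finsupp.sub_apply, hL, hf]
      change φ (g * ι ((α t).symm (b⁻¹ * a))) - φ (ι ((α t).symm (b⁻¹ * a))) = _
      rw [hsymm, map_mul, map_inv]
      congr 2 <;> group
  refine ⟨f, ?_, fun g hg => ?_, fun a ha => ?_⟩
  · have h2 := (hF 1 (by simp)).trans (min_le_right _ _)
    have h3 := norm_sub_norm_le (1 : ℂ) (1 - φ 1)
    rw [sub_sub_cancel, norm_one, norm_sub_rev] at h3
    rw [hf, map_one]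
    linarith
  · -- with `a' = g⁻¹ a g`, compare `φ a'`, `φ (g a') = φ (a g)` and `φ a`
    have h1 : twist (α g) f - f = twist (α g) (f - L g) + (R g - f) := by
      ext a
      simp only [Finsupp.sub_apply, Finsupp.add_apply, twist_apply]
      have : L g ((α g).symm a) = R g a := by
        rw [hL, hR]
        rw [hsymm]
        congr 1; group
      rw [this]; ring
    have h2 : nrm (f - L g) = nrm (L g - f) := by
      unfold nrm
      simp only [map_sub, ContinuousMap.sub_apply, norm_sub_rev]
    rw [h1]
    refine (nrm_add_le _ _).trans ?_
    rw [nrm_twist, h2]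
    linarith [hright g hg, hleft g hg]
  · have h1 : shift a f = R (ι a) := by
      ext b
      rw [shift_apply, hf, hR, map_mul]
    rw [h1]
    exact hright _ ha

end Good

/-! ### Nearly invariant probability vectors -/

section SquareRoot

variable {N : Type*} [CommGroup N] [TopologicalSpace N] [DiscreteTopology N]

lemma trig_shift (a₀ : N) (p : N →₀ ℂ) (χ : PontryaginDual N) :
    trig (shift a₀ p) χ = ev a₀⁻¹ χ * trig p χ := by
  classical
  rw [trig_apply_of_subset (shift a₀ p) (S := p.support.map (Equiv.mulRight a₀⁻¹).toEmbedding) ?_,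
    trig_apply, Finset.sum_map, Finset.mul_sum]
  · refine Finset.sum_congr rfl fun a _ => ?_
    simp
    ring
  · intro a ha
    simp only [Finsupp.mem_support_iff, shift_apply] at ha
    simp only [Finset.mem_map_equiv, Finsupp.mem_support_iff]
    simpa using ha

lemma sq_sqrt_sub_le {x y : ℝ} (hx : 0 ≤ x) (hy : 0 ≤ y) : (√x - √y) ^ 2 ≤ |x - y| := by
  have h1 := Real.sqrt_nonneg x
  have h2 := Real.sqrt_nonneg y
  have h3 : x - y = (√x - √y) * (√x + √y) := by
    ring_nf; rw [Real.sq_sqrt hx, Real.sq_sqrt hy]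
  rw [h3, abs_mul, abs_of_nonneg (add_nonneg h1 h2), ← sq_abs, sq]
  gcongr
  exact abs_le.2 ⟨by linarith [neg_abs_le (√x - √y), abs_sub_comm (√x) (√y)] , by linarith⟩

/-- The square root of the modulus of `trig f`, approximated by a trigonometric polynomial,
converts near invariance in `L¹` of the dual into near invariance in `ℓ²(N)`. -/
lemma exists_l2 (f : N →₀ ℂ) (hf : 1 / 2 ≤ ‖f 1‖) {δ : ℝ} (hδ : 0 < δ) (hδ1 : δ ≤ 1 / 4) :
    ∃ p : N →₀ ℂ, 1 / 8 ≤ ∑' a, ‖p a‖ ^ 2 ∧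
      (∀ e : N ≃* N, ∑' a, ‖(twist e p - p) a‖ ^ 2 ≤ 2 * nrm (twist e f - f) + 8 * δ ^ 2) ∧
      ∀ a₀ : N, ∑' a, ‖(shift a₀ p - p) a‖ ^ 2 ≤ 4 * nrm (shift a₀ f - f) + 8 * δ ^ 2 := by
  let h : C(PontryaginDual N, ℂ) := ⟨fun χ => ((√‖trig f χ‖ : ℝ) : ℂ), by fun_prop⟩
  have hh : ∀ χ, h χ = ((√‖trig f χ‖ : ℝ) : ℂ) := fun _ => rfl
  have hsq : ∀ χ, ‖h χ‖ ^ 2 = ‖trig f χ‖ := fun χ => by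
    rw [hh, Complex.norm_real, Real.norm_of_nonneg (Real.sqrt_nonneg _),
      Real.sq_sqrt (norm_nonneg _)]
  obtain ⟨p, hp⟩ := dense_trig h hδ
  have hintg : ∀ (F : C(PontryaginDual N, ℂ)) (c d : ℝ),
      ∫ χ, (c * ‖F χ‖ + d) ∂(dualHaar N) = c * ∫ χ, ‖F χ‖ ∂(dualHaar N) + d := by
    intro F c d
    rw [integral_add (integrable_dual (by fun_prop)) (integrable_const _), integral_const_mul]
    simp
  have hpos : ∀ χ, ‖trig p χ‖ ≤ ‖h χ‖ + δ := fun χ => by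
    have := norm_add_le (h χ) (trig p χ - h χ)
    rw [add_sub_cancel] at this
    linarith [hp χ]
  refine ⟨p, ?_, fun e => ?_, fun a₀ => ?_⟩
  · rw [← parseval]
    have h1 : ∫ χ, ((1 / 2) * ‖trig f χ‖ + (-δ ^ 2)) ∂(dualHaar N)
        ≤ ∫ χ, ‖trig p χ‖ ^ 2 ∂(dualHaar N) := by
      refine integral_mono (integrable_dual (by fun_prop)) (integrable_dual (by fun_prop))
        fun χ => ?_
      simp only [← hsq]
      have h2 := norm_sub_norm_le (h χ) (h χ - trig p χ)
      rw [sub_sub_cancel, norm_sub_rev] at h2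
      have h3 : ‖h χ‖ ≤ ‖trig p χ‖ + δ := by linarith [hp χ]
      have h4 : ‖h χ‖ ^ 2 ≤ (‖trig p χ‖ + δ) ^ 2 := by gcongr
      nlinarith [sq_nonneg (‖trig p χ‖ - δ)]
    rw [hintg] at h1
    have h2 := norm_coeff_one_le f
    unfold nrm at h2
    nlinarith
  · rw [← parseval]
    refine le_trans ?_ (hintg (trig (twist e f - f)) 2 (8 * δ ^ 2)).le
    refine integral_mono (integrable_dual (by fun_prop)) (integrable_dual (by fun_prop))
      fun χ => ?_
    simp only [map_sub, ContinuousMap.sub_apply, trig_twist]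
    set ψ := dualMap e χ
    have h1 : ‖trig p ψ - trig p χ‖ ≤ ‖h ψ - h χ‖ + 2 * δ := by
      have : trig p ψ - trig p χ = (h ψ - h χ) + (trig p ψ - h ψ) - (trig p χ - h χ) := by ring
      rw [this]
      refine (norm_sub_le _ _).trans ?_
      linarith [norm_add_le (h ψ - h χ) (trig p ψ - h ψ), hp ψ, hp χ]
    have h2 : ‖h ψ - h χ‖ ^ 2 ≤ ‖trig f ψ - trig f χ‖ := by
      rw [hh, hh, ← Complex.ofReal_sub, Complex.norm_real, Real.norm_eq_abs, sq_abs]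
      exact (sq_sqrt_sub_le (norm_nonneg _) (norm_nonneg _)).trans (abs_norm_sub_norm_le _ _)
    have h4 : ‖trig p ψ - trig p χ‖ ^ 2 ≤ (‖h ψ - h χ‖ + 2 * δ) ^ 2 := by gcongr
    nlinarith [sq_nonneg (‖h ψ - h χ‖ - 2 * δ)]
  · rw [← parseval]
    refine le_trans ?_ (hintg (trig (shift a₀ f - f)) 4 (8 * δ ^ 2)).le
    refine integral_mono (integrable_dual (by fun_prop)) (integrable_dual (by fun_prop))
      fun χ => ?_
    simp only [map_sub, ContinuousMap.sub_apply, trig_shift]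
    set u := ev a₀⁻¹ χ
    have hu : ∀ z : ℂ, u * z - z = (u - 1) * z := fun z => by ring
    rw [hu, hu, norm_mul, norm_mul, ← hsq]
    have h0 : ‖u - 1‖ ≤ 2 := by
      have := norm_sub_le u 1
      rw [norm_ev, norm_one] at this
      linarith
    have h1 : ‖trig p χ‖ ^ 2 ≤ 2 * ‖h χ‖ ^ 2 + 2 * δ ^ 2 := by
      have h4 : ‖trig p χ‖ ^ 2 ≤ (‖h χ‖ + δ) ^ 2 := by gcongr; exact hpos χ
      nlinarith [sq_nonneg (‖h χ‖ - δ)]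
    have h2 : ‖u - 1‖ ^ 2 ≤ 2 * ‖u - 1‖ := by nlinarith [norm_nonneg (u - 1)]
    have h3 : ‖u - 1‖ ^ 2 ≤ 4 := by nlinarith [norm_nonneg (u - 1)]
    rw [mul_pow]
    calc ‖u - 1‖ ^ 2 * ‖trig p χ‖ ^ 2 ≤ ‖u - 1‖ ^ 2 * (2 * ‖h χ‖ ^ 2 + 2 * δ ^ 2) := by gcongr
      _ = 2 * (‖u - 1‖ ^ 2 * ‖h χ‖ ^ 2) + 2 * (‖u - 1‖ ^ 2 * δ ^ 2) := by ring
      _ ≤ 2 * (2 * ‖u - 1‖ * ‖h χ‖ ^ 2) + 2 * (4 * δ ^ 2) := by gcongr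
      _ = _ := by ring

lemma summable_norm_sq (r : N →₀ ℂ) : Summable fun a => ‖r a‖ ^ 2 :=
  summable_of_hasFiniteSupport (r.hasFiniteSupport.subset fun a ha => by
    contrapose! ha; simp at ha; simp [ha])

/-- Passage from `ℓ²` to `ℓ¹`: squares of nearly equal `ℓ²` functions are nearly equal in `ℓ¹`. -/
lemma l1_le_of_l2 (p p' : N →₀ ℂ) (hpp : ∑' a, ‖p' a‖ ^ 2 = ∑' a, ‖p a‖ ^ 2) {κ : ℝ} (hκ : 0 < κ)
    (h : ∑' a, ‖(p' - p) a‖ ^ 2 ≤ κ ^ 2 * ∑' a, ‖p a‖ ^ 2) :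
    ∑' a, |‖p' a‖ ^ 2 - ‖p a‖ ^ 2| ≤ 2 * κ * ∑' a, ‖p a‖ ^ 2 := by
  have hs := fun r : N →₀ ℂ => summable_norm_sq r
  have key : ∀ a, |‖p' a‖ ^ 2 - ‖p a‖ ^ 2|
      ≤ κ⁻¹ * ‖(p' - p) a‖ ^ 2 + κ / 2 * (‖p' a‖ ^ 2 + ‖p a‖ ^ 2) := by
    intro a
    have h1 := abs_norm_sub_norm_le (p' a) (p a)
    rw [Finsupp.sub_apply]
    set d := ‖p' a - p a‖
    set x := ‖p' a‖ with hx
    set y := ‖p a‖ with hy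
    have hx0 : 0 ≤ x := norm_nonneg _
    have hy0 : 0 ≤ y := norm_nonneg _
    have h2 : |x ^ 2 - y ^ 2| ≤ d * (x + y) := by
      rw [show x ^ 2 - y ^ 2 = (x - y) * (x + y) by ring, abs_mul,
        abs_of_nonneg (add_nonneg hx0 hy0)]
      gcongr
    have h3 : κ⁻¹ * d ^ 2 + κ / 4 * (x + y) ^ 2 - d * (x + y)
        = κ⁻¹ * (d - κ / 2 * (x + y)) ^ 2 := by field_simp; ring
    have h4 : 0 ≤ κ⁻¹ * (d - κ / 2 * (x + y)) ^ 2 := by positivity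
    nlinarith [mul_nonneg hκ.le (sq_nonneg (x - y))]
  have hs1 := (hs (p' - p)).mul_left κ⁻¹
  have hs2 := ((hs p').add (hs p)).mul_left (κ / 2)
  calc ∑' a, |‖p' a‖ ^ 2 - ‖p a‖ ^ 2|
      ≤ ∑' a, (κ⁻¹ * ‖(p' - p) a‖ ^ 2 + κ / 2 * (‖p' a‖ ^ 2 + ‖p a‖ ^ 2)) :=
        ((hs p').sub (hs p)).abs.tsum_le_tsum key (hs1.add hs2)
    _ = κ⁻¹ * ∑' a, ‖(p' - p) a‖ ^ 2 + κ / 2 * (∑' a, ‖p' a‖ ^ 2 + ∑' a, ‖p a‖ ^ 2) := by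
        rw [hs1.tsum_add hs2, tsum_mul_left, tsum_mul_left, (hs p').tsum_add (hs p)]
    _ ≤ κ⁻¹ * (κ ^ 2 * ∑' a, ‖p a‖ ^ 2) + κ / 2 * (∑' a, ‖p' a‖ ^ 2 + ∑' a, ‖p a‖ ^ 2) := by
        gcongr
    _ = _ := by rw [hpp]; field_simp; ring

lemma tsum_twist (e : N ≃* N) (p : N →₀ ℂ) : ∑' a, ‖twist e p a‖ ^ 2 = ∑' a, ‖p a‖ ^ 2 :=
  e.symm.toEquiv.tsum_eq fun a => ‖p a‖ ^ 2

lemma tsum_shift (a₀ : N) (p : N →₀ ℂ) : ∑' a, ‖shift a₀ p a‖ ^ 2 = ∑' a, ‖p a‖ ^ 2 := by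
  simp only [shift_apply]
  exact (Equiv.mulRight a₀).tsum_eq fun a => ‖p a‖ ^ 2

/-- A nearly invariant square-summable function yields, after restriction of its square to
`N ∖ {1}`, a nearly invariant probability vector: near invariance under a translation `a₀ ≠ 1`
prevents the mass from concentrating at `1`. -/
lemma exists_prob (p : N →₀ ℂ) (hp : 0 < ∑' a, ‖p a‖ ^ 2) {a₀ : N} (ha₀ : a₀ ≠ 1) {κ : ℝ}
    (hκ : 0 < κ) (hκ1 : κ ≤ 1 / 4)
    (hsh : ∑' a, ‖(shift a₀ p - p) a‖ ^ 2 ≤ κ ^ 2 * ∑' a, ‖p a‖ ^ 2) :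
    ∃ q : N →₀ ℝ, (∀ a, 0 ≤ q a) ∧ q 1 = 0 ∧ ∑' a, q a = 1 ∧
      ∀ e : N ≃* N, ∑' a, ‖(twist e p - p) a‖ ^ 2 ≤ κ ^ 2 * ∑' a, ‖p a‖ ^ 2 →
        ∑' a, |q (e.symm a) - q a| ≤ 8 * κ := by
  classical
  set M := ∑' a, ‖p a‖ ^ 2 with hM
  have hs := fun r : N →₀ ℂ => summable_norm_sq r
  have hs1 := l1_le_of_l2 p (shift a₀ p) (tsum_shift a₀ p) hκ hsh
  rw [← hM] at hs1
  have h1 : |‖p a₀‖ ^ 2 - ‖p 1‖ ^ 2| ≤ 2 * κ * M := by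
    refine le_trans ?_ hs1
    have := ((hs (shift a₀ p)).sub (hs p)).abs.le_tsum 1 fun _ _ => abs_nonneg _
    simpa using this
  have h2 : ‖p a₀‖ ^ 2 + ‖p 1‖ ^ 2 ≤ M := by
    have := (hs p).sum_le_tsum {a₀, 1} fun _ _ => by positivity
    rwa [Finset.sum_pair ha₀] at this
  -- `‖p 1‖ ^ 2` is at most about half of `M`, as `‖p a₀‖ ^ 2` is nearly as large
  have h3 : M / 4 ≤ M - ‖p 1‖ ^ 2 := by
    have := (abs_le.1 h1).1
    nlinarith
  set m := M - ‖p 1‖ ^ 2 with hm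
  have hm0 : 0 < m := by linarith
  let q₀ : N → ℝ := fun a => if a = 1 then 0 else m⁻¹ * ‖p a‖ ^ 2
  have hfin : (Function.support q₀).Finite := p.hasFiniteSupport.subset fun a ha => by
    contrapose! ha; simp at ha; simp [q₀, ha]
  let q : N →₀ ℝ := Finsupp.ofSupportFinite q₀ hfin
  have hq : ∀ a, q a = if a = 1 then 0 else m⁻¹ * ‖p a‖ ^ 2 := fun a => rfl
  refine ⟨q, fun a => ?_, by simp [hq], ?_, fun e he => ?_⟩
  · rw [hq]; split_ifs <;> positivity
  · have : ∀ a, q a = m⁻¹ * (if a = 1 then 0 else ‖p a‖ ^ 2) := fun a => by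
      rw [hq]; split_ifs <;> simp
    simp only [this]
    rw [tsum_mul_left, ← inv_mul_cancel₀ hm0.ne', hm, hM, (hs p).tsum_eq_add_tsum_ite 1]
    congr 1; ring
  · have h5 := l1_le_of_l2 p (twist e p) (tsum_twist e p) hκ he
    rw [← hM] at h5
    have hsm := ((hs (twist e p)).sub (hs p)).abs
    have h6 : ∑' a, |q (e.symm a) - q a| ≤ ∑' a, m⁻¹ * |‖twist e p a‖ ^ 2 - ‖p a‖ ^ 2| := by
      have hle : ∀ a, |q (e.symm a) - q a| ≤ m⁻¹ * |‖twist e p a‖ ^ 2 - ‖p a‖ ^ 2| := by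
        intro a
        by_cases ha : a = 1
        · subst ha
          simp only [map_one, sub_self, abs_zero]
          positivity
        · have ha' : e.symm a ≠ 1 := by simpa using ha
          rw [hq, hq, if_neg ha, if_neg ha', ← mul_sub, abs_mul, abs_of_pos (inv_pos.2 hm0),
            twist_apply]
      exact (Summable.of_nonneg_of_le (fun _ => abs_nonneg _) hle (hsm.mul_left _)).tsum_le_tsum
        hle (hsm.mul_left _)
    refine h6.trans ?_
    rw [tsum_mul_left]
    refine (inv_mul_le_iff₀ hm0).2 (h5.trans ?_)
    nlinarith

end SquareRoot

section Combine

variable {G N : Type*} [Group G] [CommGroup N]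

/-- In a weakly amenable group `G`, an abelian normal subgroup `N` carries finitely supported
probability vectors that avoid `1` and are nearly invariant under conjugation by `G`. -/
lemma exists_nearly_invariant_prob {C : ℝ} (h : WeaklyAmenableWithConst G C) (ι : N →* G)
    (hι : Function.Injective ι) (α : G →* MulAut N) (hα : ∀ g a, ι (α g a) = g * ι a * g⁻¹)
    [Nontrivial N] (F : Finset G) {κ : ℝ} (hκ : 0 < κ) :
    ∃ q : N →₀ ℝ, (∀ a, 0 ≤ q a) ∧ q 1 = 0 ∧ ∑' a, q a = 1 ∧
      ∀ g ∈ F, ∑' a, |q ((α g).symm a) - q a| ≤ κ := by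
  classical
  let _ : TopologicalSpace N := ⊥
  have _ : DiscreteTopology N := ⟨rfl⟩
  obtain ⟨a₀, ha₀⟩ := exists_ne (1 : N)
  obtain ⟨U, S, hS⟩ := exists_isFoelnerAlong N
  set k := min (κ / 8) (1 / 4) with hk
  have hk0 : 0 < k := by positivity
  have hk1 : k ≤ 1 / 4 := min_le_right _ _
  have hC : 0 < 2 + 2 * C ^ 2 := by positivity
  set r := k ^ 2 / (64 * (2 + 2 * C ^ 2)) with hr
  have hr0 : 0 < r := by positivity
  have hrC : r * (2 + 2 * C ^ 2) = k ^ 2 / 64 := by rw [hr]; field_simp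
  have hr1 : r < 1 := by
    rw [hr, div_lt_one (by positivity)]
    nlinarith [sq_nonneg C]
  obtain ⟨f, hf, hfα, hfs⟩ := near_invariant hS hι α hα h.good (insert (ι a₀) F) hr0 hr1
  obtain ⟨p, hp, hpα, hps⟩ := exists_l2 f hf (δ := k / 12) (by positivity) (by linarith)
  obtain ⟨q, hq0, hq1, hqs, hq⟩ := exists_prob p (by linarith) ha₀ hk0 hk1 (by
    refine (hps a₀).trans ?_
    have := hfs a₀ (by simp)
    nlinarith)
  refine ⟨q, hq0, hq1, hqs, fun g hg => ?_⟩
  refine (hq (α g) ?_).trans (by linarith [min_le_left (κ / 8) (1 / 4)])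
  refine (hpα _).trans ?_
  have := hfα g (Finset.mem_insert_of_mem hg)
  nlinarith

end Combine

/-! ### From probability vectors to an invariant mean -/

section Mean

variable {Γ X : Type*} [Group Γ]

/-- The average of `f` over the finite set `T` (zero if `T` is empty). -/
def avg (T : Finset Γ) (f : Γ → ℂ) : ℂ := (T.card : ℂ)⁻¹ * ∑ x ∈ T, f x

lemma norm_avg_le (T : Finset Γ) {f : Γ → ℂ} {c : ℝ} (hc : 0 ≤ c) (hf : ∀ x, ‖f x‖ ≤ c) :
    ‖avg T f‖ ≤ c := by
  rw [avg, norm_mul, norm_inv, Complex.norm_natCast]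
  rcases T.eq_empty_or_nonempty with rfl | hT
  · simpa
  · have : (0 : ℝ) < T.card := by exact_mod_cast hT.card_pos
    rw [inv_mul_le_iff₀ this]
    refine (norm_sum_le_of_le _ fun x _ => hf x).trans ?_
    simp

lemma avg_one {T : Finset Γ} (hT : T.Nonempty) {f : Γ → ℂ} (hf : ∀ x, f x = 1) :
    avg T f = 1 := by
  have : (T.card : ℂ) ≠ 0 := by exact_mod_cast hT.card_pos.ne'
  simp [avg, hf, this]

lemma avg_nonneg (T : Finset Γ) {f : Γ → ℂ} (hf : ∀ x, 0 ≤ f x) : 0 ≤ avg T f :=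
  mul_nonneg (inv_nonneg.2 (by positivity)) (Finset.sum_nonneg fun x _ => hf x)

/-- The `q`-weighted mean of the averages of `f` over the sets `s a`. -/
def wavg (s : X → Finset Γ) (q : X →₀ ℝ) (f : Γ → ℂ) : ℂ := ∑' a, (q a : ℂ) * avg (s a) f

lemma summable_wavg (q : X →₀ ℝ) (u : X → ℂ) : Summable fun a => (q a : ℂ) * u a :=
  summable_of_hasFiniteSupport (q.hasFiniteSupport.subset fun a ha => by
    contrapose! ha; simp at ha; simp [ha])

lemma summable_coe (q : X →₀ ℝ) : Summable fun a => q a :=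
  summable_of_hasFiniteSupport q.hasFiniteSupport

lemma norm_wavg_le (s : X → Finset Γ) {q : X →₀ ℝ} (hq : ∀ a, 0 ≤ q a) (hq1 : ∑' a, q a = 1)
    {f : Γ → ℂ} {c : ℝ} (hc : 0 ≤ c) (hf : ∀ x, ‖f x‖ ≤ c) : ‖wavg s q f‖ ≤ c := by
  have h := (summable_coe q).hasSum.mul_right c
  rw [hq1, one_mul] at h
  refine tsum_of_norm_bounded h fun a => ?_
  rw [norm_mul, Complex.norm_real, Real.norm_of_nonneg (hq a)]
  exact mul_le_mul_of_nonneg_left (norm_avg_le _ hc hf) (hq a)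

lemma avg_translate {s : X → Finset Γ} {g : Γ} {e : X ≃ X}
    (hs : ∀ a x, x ∈ s (e a) ↔ g⁻¹ * x ∈ s a) {f f' : Γ → ℂ} (hf : ∀ x, f' x = f (g⁻¹ * x))
    (a : X) : avg (s a) f' = avg (s (e.symm a)) f := by
  have h : s a = (s (e.symm a)).map (Equiv.mulLeft g).toEmbedding := by
    ext x
    have := hs (e.symm a) x
    rw [e.apply_symm_apply] at this
    rw [this, Finset.mem_map_equiv]
    simp
  unfold avg
  rw [h, Finset.sum_map, Finset.card_map]
  simp [hf]

/-- Near invariance of `q` is near invariance of the mean `wavg s q`. -/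
lemma wavg_translate {s : X → Finset Γ} {g : Γ} {e : X ≃ X}
    (hs : ∀ a x, x ∈ s (e a) ↔ g⁻¹ * x ∈ s a) {f f' : Γ → ℂ} (hf : ∀ x, f' x = f (g⁻¹ * x))
    {c : ℝ} (hc : 0 ≤ c) (hfc : ∀ x, ‖f x‖ ≤ c) (q : X →₀ ℝ) {κ : ℝ}
    (hq : ∑' a, |q (e.symm a) - q a| ≤ κ) : ‖wavg s q f' - wavg s q f‖ ≤ κ * c := by
  have hsum : Summable fun a => |q (e.symm a) - q a| :=
    (((e.symm.summable_iff (f := fun a => q a)).2 (summable_coe q)).sub (summable_coe q)).abs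
  have h1 : wavg s q f = ∑' a, (q (e.symm a) : ℂ) * avg (s (e.symm a)) f :=
    (e.symm.tsum_eq fun a => (q a : ℂ) * avg (s a) f).symm
  have h2 : Summable fun a => (q (e.symm a) : ℂ) * avg (s (e.symm a)) f :=
    (e.symm.summable_iff (f := fun a => (q a : ℂ) * avg (s a) f)).2 (summable_wavg q _)
  rw [h1, wavg]
  simp only [avg_translate hs hf]
  rw [← (summable_wavg q _).tsum_sub h2]
  refine (tsum_of_norm_bounded (hsum.hasSum.mul_right c) fun a => ?_).trans (by gcongr)
  rw [← sub_mul, norm_mul, ← Complex.ofReal_sub, Complex.norm_real, Real.norm_eq_abs, abs_sub_comm]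
  gcongr
  exact norm_avg_le _ hc hfc

/-- Nearly invariant probability vectors on a `Γ`-set `X` that maps equivariantly to the nonempty
finite subsets of `Γ` produce an invariant mean on `Γ`. -/
lemma isAmenable_of_prob (s : X → Finset Γ) (β : Γ → (X ≃ X))
    (hs : ∀ g a x, x ∈ s (β g a) ↔ g⁻¹ * x ∈ s a)
    (hq : ∀ (F : Finset Γ) (κ : ℝ), 0 < κ → ∃ q : X →₀ ℝ, (∀ a, 0 ≤ q a) ∧
      (∀ a, q a ≠ 0 → (s a).Nonempty) ∧ ∑' a, q a = 1 ∧
      ∀ g ∈ F, ∑' a, |q ((β g).symm a) - q a| ≤ κ) : IsAmenable Γ := by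
  classical
  choose q hq0 hqs hq1 hqF using fun i : Finset Γ × ℕ =>
    hq i.1 (1 / ((i.2 : ℝ) + 1)) (by positivity)
  let U : Ultrafilter (Finset Γ × ℕ) := Ultrafilter.of atTop
  have hU : (U : Filter (Finset Γ × ℕ)) ≤ atTop := Ultrafilter.of_le _
  have hlim : ∀ f : lp (fun _ : Γ => ℂ) ∞, ∃ z, Tendsto (fun i => wavg s (q i) f) U (nhds z) := by
    intro f
    have := (isCompact_closedBall (0 : ℂ) ‖f‖).ultrafilter_le_nhds
      (U.map fun i => wavg s (q i) f) (by
        simp only [Ultrafilter.coe_map, le_principal_iff, mem_map]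
        refine Eventually.of_forall fun i => ?_
        simpa using norm_wavg_le s (hq0 i) (hq1 i) (norm_nonneg f)
          fun x => lp.norm_apply_le_norm ENNReal.top_ne_zero f x)
    obtain ⟨z, -, hz⟩ := this
    exact ⟨z, hz⟩
  choose m hm using hlim
  refine ⟨{ toFun := m, map_add' := fun f g => ?_, map_smul' := fun c f => ?_ }, fun f hf => ?_,
    fun f hf => ?_, fun g f f' hf => ?_⟩
  · refine tendsto_nhds_unique (hm (f + g)) (((hm f).add (hm g)).congr fun i => ?_)
    unfold wavg
    rw [← (summable_wavg _ _).tsum_add (summable_wavg _ _)]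
    refine tsum_congr fun a => ?_
    simp only [avg, lp.coeFn_add, Pi.add_apply, Finset.sum_add_distrib]
    ring
  · refine tendsto_nhds_unique (hm (c • f)) (((hm f).const_mul c).congr fun i => ?_)
    unfold wavg
    rw [← tsum_mul_left]
    refine tsum_congr fun a => ?_
    simp only [avg, lp.coeFn_smul, Pi.smul_apply, smul_eq_mul, ← Finset.mul_sum]
    ring
  · refine ge_of_tendsto (hm f) (Eventually.of_forall fun i => ?_)
    exact tsum_nonneg fun a =>
      mul_nonneg (Complex.zero_le_real.2 (hq0 i a)) (avg_nonneg _ hf)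
  · refine tendsto_nhds_unique (hm f) (tendsto_const_nhds.congr fun i => ?_)
    unfold wavg
    have : ∀ a, (q i a : ℂ) * avg (s a) f = (q i a : ℂ) := fun a => by
      by_cases ha : q i a = 0
      · simp [ha]
      · rw [avg_one (hqs i a ha) hf, mul_one]
    simp only [this]
    rw [← Complex.ofReal_tsum, hq1, Complex.ofReal_one]
  · have h0 : Tendsto (fun i : Finset Γ × ℕ => 1 / ((i.2 : ℝ) + 1) * ‖f‖) U (nhds 0) := by
      have h1 : Tendsto (fun i : Finset Γ × ℕ => i.2) atTop atTop := by
        rw [← prod_atTop_atTop_eq]; exact tendsto_snd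
      simpa using ((tendsto_one_div_add_atTop_nhds_zero_nat (𝕜 := ℝ)).comp
        (h1.mono_left hU)).mul_const ‖f‖
    have h2 : Tendsto (fun i => wavg s (q i) f' - wavg s (q i) f) U (nhds 0) := by
      refine squeeze_zero_norm' ?_ h0
      have : ∀ᶠ i : Finset Γ × ℕ in (U : Filter _), ({g}, 0) ≤ i := hU (eventually_ge_atTop _)
      filter_upwards [this] with i hi
      exact wavg_translate (hs g) hf (norm_nonneg f)
        (fun x => lp.norm_apply_le_norm ENNReal.top_ne_zero f x) (q i)
        (hqF i g (hi.1 (Finset.mem_singleton_self g)))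
    exact sub_eq_zero.1 (tendsto_nhds_unique ((hm f').sub (hm f)) h2)

end Mean

/-! ### Wreath products -/

section Wreath

variable {Γ Λ}

/-- Weak amenability passes to subgroups. -/
lemma WeaklyAmenableWithConst.of_injective {G K : Type*} [Group G] [Group K] {C : ℝ}
    (h : WeaklyAmenableWithConst G C) (j : K →* G) (hj : Function.Injective j) :
    WeaklyAmenableWithConst K C := by
  classical
  intro F ε hε
  obtain ⟨φ, hfin, hF, H, i1, i2, i3, ξ, η, A, B, hA, hB, hξ, hη, hAB, hφ⟩ := h (F.image j) ε hε
  exact ⟨fun x => φ (j x), hfin.preimage hj.injOn, fun s hs => hF _ (Finset.mem_image_of_mem _ hs),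
    H, i1, i2, i3, fun x => ξ (j x), fun x => η (j x), A, B, hA, hB, fun t => hξ _, fun t => hη _,
    hAB, fun s t => by simp only [← hφ, map_mul, map_inv]⟩

/-- The homomorphism of groups of finitely supported functions induced by `j : Z →* Λ`. -/
def finSuppMap {Z : Type*} [Group Z] (j : Z →* Λ) : FinSupportFns Γ Z →* FinSupportFns Γ Λ where
  toFun f := ⟨fun x => j ((f : Γ → Z) x), f.2.subset fun x hx => by
    contrapose! hx
    simp only [Function.mem_mulSupport, not_not] at hx ⊢
    rw [hx, map_one]⟩
  map_one' := by ext x; simp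
  map_mul' f g := by ext x; simp

/-- The homomorphism of wreath products induced by `j : Z →* Λ`. -/
def wreathMap {Z : Type*} [Group Z] (j : Z →* Λ) : WreathProduct Γ Z →* WreathProduct Γ Λ :=
  SemidirectProduct.map (N₁ := FinSupportFns Γ Z) (G₁ := Γ) (φ₁ := shiftAut Γ Z)
    (N₂ := FinSupportFns Γ Λ) (G₂ := Γ) (φ₂ := shiftAut Γ Λ)
    (finSuppMap j) (MonoidHom.id Γ) fun g => by ext f x; rfl

lemma wreathMap_injective {Z : Type*} [Group Z] {j : Z →* Λ} (hj : Function.Injective j) :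
    Function.Injective (wreathMap (Γ := Γ) j) := by
  intro a b hab
  have h1 := congrArg SemidirectProduct.left hab
  have h2 := congrArg SemidirectProduct.right hab
  refine SemidirectProduct.ext ?_ h2
  ext x
  exact hj (congrFun (congrArg Subtype.val h1) x)

instance {Z : Type*} [CommGroup Z] : CommGroup (FinSupportFns Γ Z) :=
  { (inferInstance : Group (FinSupportFns Γ Z)) with
    mul_comm := fun f g => by ext x; simp [mul_comm] }

/-- When the kernel is abelian, conjugation by `g` acts on it through the quotient. -/
lemma inl_conj {N G : Type*} [CommGroup N] [Group G] {φ : G →* MulAut N}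
    (g : SemidirectProduct N G φ) (a : N) :
    SemidirectProduct.inl (φ g.right a) = g * SemidirectProduct.inl a * g⁻¹ := by
  ext
  · simp [mul_comm]
  · simp

/-- For an abelian lamp group, weak amenability of the wreath product forces amenability of the
base: the nearly invariant probability vectors on finitely supported functions are transported
to `Γ` by means of the supports of these functions. -/
lemma isAmenable_of_wreath {Z : Type*} [CommGroup Z] [Nontrivial Z] {C : ℝ}
    (h : WeaklyAmenableWithConst (WreathProduct Γ Z) C) : IsAmenable Γ := by
  classical
  let ι : FinSupportFns Γ Z →* WreathProduct Γ Z :=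
    SemidirectProduct.inl (N := FinSupportFns Γ Z) (G := Γ) (φ := shiftAut Γ Z)
  let ρ : Γ →* WreathProduct Γ Z :=
    SemidirectProduct.inr (N := FinSupportFns Γ Z) (G := Γ) (φ := shiftAut Γ Z)
  let π : WreathProduct Γ Z →* Γ :=
    SemidirectProduct.rightHom (N := FinSupportFns Γ Z) (G := Γ) (φ := shiftAut Γ Z)
  have hι : Function.Injective ι := SemidirectProduct.inl_injective
  have hα : ∀ g a, ι (((shiftAut Γ Z).comp π) g a) = g * ι a * g⁻¹ := by
    intro g a
    exact inl_conj (φ := shiftAut Γ Z) g a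
  have : Nontrivial (FinSupportFns Γ Z) := by
    obtain ⟨z, hz⟩ := exists_ne (1 : Z)
    refine ⟨⟨Pi.mulSingle 1 z, (Set.finite_singleton 1).subset
      Pi.mulSupport_mulSingle_subset⟩, 1, fun he => hz ?_⟩
    simpa using congrFun (congrArg Subtype.val he) 1
  let s : FinSupportFns Γ Z → Finset Γ := fun f => Set.Finite.toFinset f.2
  have hs : ∀ f x, x ∈ s f ↔ (f : Γ → Z) x ≠ 1 := fun f x =>
    Set.Finite.mem_toFinset _
  refine isAmenable_of_prob s (fun g => (shiftAut Γ Z g).toEquiv) (fun g a x => ?_) fun F κ hκ => ?_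
  · rw [hs, hs]; rfl
  · obtain ⟨q, hq0, hq1, hqs, hqF⟩ := exists_nearly_invariant_prob h ι hι _ hα (F.image ρ) hκ
    refine ⟨q, hq0, fun a ha => ?_, hqs, fun g hg => ?_⟩
    · by_contra hne
      refine ha ?_
      have : a = 1 := by
        ext x
        by_contra hx
        exact hne ⟨x, (hs a x).2 hx⟩
      rw [this, hq1]
    · exact hqF (ρ g) (Finset.mem_image_of_mem _ hg)

lemma isAmenable_of_wreath_embedding {Z : Type*} [CommGroup Z] [Nontrivial Z] (j : Z →* Λ)
    (hj : Function.Injective j) {C : ℝ} (h : WeaklyAmenableWithConst (WreathProduct Γ Λ) C) :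
    IsAmenable Γ :=
  isAmenable_of_wreath (h.of_injective (wreathMap j) (wreathMap_injective hj))

end Wreath

/-- **Ozawa.** If `Γ` is nonamenable and `Λ` is nontrivial, then the wreath product
`Λ ≀ Γ` is not weakly amenable. -/
theorem wreath_not_weaklyAmenable (hΓ : ¬ IsAmenable Γ) [Nontrivial Λ] :
    ¬ ∃ C : ℝ, 1 ≤ C ∧ WeaklyAmenableWithConst (WreathProduct Γ Λ) C := by
  rintro ⟨C, -, h⟩
  obtain ⟨l, hl⟩ := exists_ne (1 : Λ)
  have : Nontrivial (Subgroup.zpowers l) :=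
    (Subgroup.nontrivial_iff_ne_bot _).2 (by simpa using hl)
  let _ : CommGroup (Subgroup.zpowers l) :=
    { (inferInstance : Group (Subgroup.zpowers l)) with mul_comm := mul_comm' }
  -- the lamp group may be replaced by a nontrivial cyclic subgroup
  exact hΓ (isAmenable_of_wreath_embedding (Z := Subgroup.zpowers l) (Subgroup.zpowers l).subtype
    (Subgroup.subtype_injective _) h)
end
end

section
/- Let Γ be a countable discrete group. Then Γ is amenable if and only if there is a sequence (φ_n) of finitely supported positive definite functions φ_n : Γ → ℂ such that φ_n(s) → 1 as n → ∞ for every s ∈ Γ. -/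
/-!
Let `λ` be the left regular representation of `Γ` on `ℓ²(Γ)`.

If `φ` is finitely supported and positive definite, right convolution by `φ` is a bounded positive
operator `T` on `ℓ²(Γ)` commuting with `λ`. Its square root also commutes with `λ`, so
`ξ = √T δ₁` satisfies `⟪ξ, λ(s) ξ⟫ = ⟪δ₁, T δ_s⟫ = φ s` (`exists_vector`). Hence
`‖λ(s) ξ - ξ‖² = 2 (φ 1 - Re φ s)`, and along a sequence `φₙ → 1` the vectors `ξₙ` are asymptotically
invariant and of norm tending to `1`. An ultralimit of the functionals `f ↦ ∑ₓ f x |ξₙ x|²` is then an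
invariant mean (`isAmenable_of_vectors`).

Conversely, by Day's convexity argument an invariant mean provides, for every finite set `E ⊆ Γ`, a
finitely supported probability density `h` that is almost invariant in `ℓ¹` under `E`
(`exists_almost_invariant`). The unit vector `ψ = √h` is finitely supported and almost invariant in
`ℓ²` because `(√a - √b)² ≤ |a - b|`, so `s ↦ ⟪ψ, λ(s) ψ⟫` is finitely supported, positive definite and
close to `1` on `E` (`exists_posDef_near_one`). Exhausting the countable group by finite sets gives
the sequence.
-/


open scoped ComplexOrder ComplexConjugate ENNReal

noncomputable section

/-- A function `φ : Γ → ℂ` on a group is positive definite if all the finite quadratic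
sums `∑_{i,j} φ (s_j⁻¹ s_i) z_i conj (z_j)` are nonnegative real numbers. -/
def IsPosDefFn {Γ : Type*} [Group Γ] (φ : Γ → ℂ) : Prop :=
  ∀ (m : ℕ) (s : Fin m → Γ) (z : Fin m → ℂ),
    0 ≤ ∑ i, ∑ j, φ ((s j)⁻¹ * s i) * z i * conj (z j)

namespace AmenablePosDef

open Filter Topology

/-! ### Operators on `ℓ²(Γ)` -/

/-- The Hilbert space `ℓ²(Γ)`. -/
abbrev L2 (Γ : Type*) := lp (fun _ : Γ => ℂ) 2

variable {Γ : Type*}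

lemma memℓp_comp (σ : Γ ≃ Γ) (f : L2 Γ) : Memℓp (fun x => f (σ x)) 2 := by
  have h := (lp.memℓp f).summable (by norm_num)
  exact memℓp_gen ((Equiv.summable_iff σ).2 h)

/-- Composition with a permutation `σ` of `Γ`, as a linear map on `ℓ²(Γ)`. -/
def reindexₗ (σ : Γ ≃ Γ) : L2 Γ →ₗ[ℂ] L2 Γ where
  toFun f := ⟨fun x => f (σ x), memℓp_comp σ f⟩
  map_add' _ _ := rfl
  map_smul' _ _ := rfl

lemma inner_reindexₗ (σ : Γ ≃ Γ) (f g : L2 Γ) :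
    inner ℂ (reindexₗ σ f) (reindexₗ σ g) = inner ℂ f g := by
  rw [lp.inner_eq_tsum, lp.inner_eq_tsum]
  exact Equiv.tsum_eq σ (fun x => inner ℂ (f x) (g x))

/-- Composition with a permutation `σ` of `Γ`, as a bounded operator on `ℓ²(Γ)`. -/
def reindex (σ : Γ ≃ Γ) : L2 Γ →L[ℂ] L2 Γ :=
  ((reindexₗ σ).isometryOfInner (inner_reindexₗ σ)).toContinuousLinearMap

@[simp] lemma reindex_apply (σ : Γ ≃ Γ) (f : L2 Γ) (x : Γ) : reindex σ f x = f (σ x) := rfl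

lemma inner_reindex (σ : Γ ≃ Γ) (f g : L2 Γ) :
    inner ℂ (reindex σ f) (reindex σ g) = inner ℂ f g := inner_reindexₗ σ f g

lemma norm_reindex (σ : Γ ≃ Γ) (f : L2 Γ) : ‖reindex σ f‖ = ‖f‖ :=
  ((reindexₗ σ).isometryOfInner (inner_reindexₗ σ)).norm_map f

/-- Pointwise comparison giving both that `f * ξ` is in `ℓ²` and the bound on its norm. -/
lemma norm_mul_apply_le (f : lp (fun _ : Γ => ℂ) ∞) (ξ : L2 Γ) (x : Γ) :
    ‖f x * ξ x‖ ≤ ‖(((‖f‖ : ℝ) : ℂ) • ξ) x‖ := by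
  have := lp.norm_apply_le_norm (by simp) f x
  simp only [lp.coeFn_smul, Pi.smul_apply, smul_eq_mul, norm_mul, Complex.norm_real, norm_norm]
  gcongr

lemma memℓp_mul (f : lp (fun _ : Γ => ℂ) ∞) (ξ : L2 Γ) : Memℓp (fun x => f x * ξ x) 2 :=
  (lp.memℓp (((‖f‖ : ℝ) : ℂ) • ξ)).mono' (norm_mul_apply_le f ξ)

/-- Multiplication by bounded functions, as a bilinear map `ℓ^∞(Γ) × ℓ²(Γ) → ℓ²(Γ)`. -/
def mulOp : lp (fun _ : Γ => ℂ) ∞ →ₗ[ℂ] L2 Γ →ₗ[ℂ] L2 Γ :=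
  LinearMap.mk₂ ℂ (fun f ξ => (⟨fun x => f x * ξ x, memℓp_mul f ξ⟩ : L2 Γ))
    (fun f g ξ => by ext x; exact add_mul (f x) (g x) (ξ x))
    (fun c f ξ => by ext x; exact mul_assoc c (f x) (ξ x))
    (fun f ξ η => by ext x; exact mul_add (f x) (ξ x) (η x))
    (fun c f ξ => by ext x; exact mul_left_comm (f x) c (ξ x))

@[simp] lemma mulOp_apply (f : lp (fun _ : Γ => ℂ) ∞) (ξ : L2 Γ) (x : Γ) :
    mulOp f ξ x = f x * ξ x := rfl

lemma norm_mulOp_le (f : lp (fun _ : Γ => ℂ) ∞) (ξ : L2 Γ) : ‖mulOp f ξ‖ ≤ ‖f‖ * ‖ξ‖ := by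
  have h := lp.norm_mono (p := 2) (by norm_num) (x := mulOp f ξ) (y := ((‖f‖ : ℝ) : ℂ) • ξ)
    (norm_mul_apply_le f ξ)
  rwa [norm_smul, Complex.norm_real, norm_norm] at h

lemma inner_mulOp_nonneg (f : lp (fun _ : Γ => ℂ) ∞) (hf : ∀ x, 0 ≤ f x) (ξ : L2 Γ) :
    0 ≤ inner ℂ ξ (mulOp f ξ) := by
  rw [lp.inner_eq_tsum]
  refine tsum_nonneg fun x => ?_
  rw [mulOp_apply, RCLike.inner_apply, mul_assoc]
  exact mul_nonneg (hf x) (mul_star_self_nonneg (ξ x))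

open Classical in
/-- The point mass at `x`, as an element of `ℓ²(Γ)`. -/
def delta (x : Γ) : L2 Γ := lp.single 2 x 1

open Classical in
lemma delta_apply (x y : Γ) : delta x y = if y = x then 1 else 0 := by
  simp [delta, Pi.single_apply]

lemma inner_delta_left (x : Γ) (f : L2 Γ) : inner ℂ (delta x) f = f x := by
  classical
  simp [delta, lp.inner_single_left]

variable [Group Γ]

/-- The left regular representation, `(leftReg s f) x = f (s⁻¹ x)`. -/
def leftReg (s : Γ) : L2 Γ →L[ℂ] L2 Γ := reindex (Equiv.mulLeft s⁻¹)

@[simp] lemma leftReg_apply (s : Γ) (f : L2 Γ) (x : Γ) : leftReg s f x = f (s⁻¹ * x) := rfl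

lemma leftReg_delta (s x : Γ) : leftReg s (delta x) = delta (s * x) := by
  classical
  ext y
  simp [delta_apply, inv_mul_eq_iff_eq_mul]

/-- The defining inequality of positive definiteness, over a finite subset of `Γ` instead of a tuple
of elements. -/
lemma IsPosDefFn.sum_finset {φ : Γ → ℂ} (hφ : IsPosDefFn φ) (F : Finset Γ) (c : Γ → ℂ) :
    0 ≤ ∑ x ∈ F, ∑ y ∈ F, φ (y⁻¹ * x) * c x * conj (c y) := by
  have h := hφ F.card (fun i => (F.equivFin.symm i : Γ)) (fun i => c (F.equivFin.symm i))
  rw [← Finset.sum_coe_sort F]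
  simp_rw [← Finset.sum_coe_sort F (fun y => φ (y⁻¹ * _) * c _ * conj (c y))]
  rw [← Equiv.sum_comp F.equivFin.symm]
  simp_rw [← Equiv.sum_comp F.equivFin.symm (fun y : F => φ ((y : Γ)⁻¹ * _) * c _ * conj (c y))]
  exact h

/-! ### Positive definite functions as coefficients of the left regular representation -/

/-- Right convolution by a finitely supported `φ`, `(convOp φ f) x = ∑ₜ φ t f (x t)`. -/
def convOp (φ : Γ →₀ ℂ) : L2 Γ →L[ℂ] L2 Γ :=
  ∑ t ∈ φ.support, φ t • reindex (Equiv.mulRight t)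

lemma convOp_apply (φ : Γ →₀ ℂ) (f : L2 Γ) (x : Γ) :
    convOp φ f x = ∑ t ∈ φ.support, φ t * f (x * t) := by
  rw [convOp, sum_apply, lp.coeFn_sum, Finset.sum_apply]
  rfl

lemma convOp_delta (φ : Γ →₀ ℂ) (x y : Γ) : convOp φ (delta x) y = φ (y⁻¹ * x) := by
  classical
  simp only [convOp_apply, delta_apply]
  rw [Finset.sum_congr rfl (g := fun t => if t = y⁻¹ * x then φ t else 0)]
  · simp +contextual
  · intro t _
    simp [eq_inv_mul_iff_mul_eq]

lemma leftReg_convOp (φ : Γ →₀ ℂ) (s : Γ) : Commute (leftReg s) (convOp φ) := by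
  ext f x
  simp [convOp_apply, mul_assoc]

/-- The quadratic form of `convOp φ` on finitely supported functions is the one that defines positive
definiteness of `φ`, and these functions are dense. -/
lemma convOp_nonneg (φ : Γ →₀ ℂ) (hφ : IsPosDefFn φ) : 0 ≤ convOp φ := by
  classical
  rw [ContinuousLinearMap.nonneg_iff_isPositive, ContinuousLinearMap.isPositive_iff_complex]
  suffices h : ∀ f, 0 ≤ inner ℂ f (convOp φ f) by
    intro f
    have h' : 0 ≤ inner ℂ (convOp φ f) f := by
      rw [← inner_conj_symm, RCLike.star_def.symm]
      exact star_nonneg_iff.2 (h f)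
    rw [Complex.nonneg_iff] at h'
    refine ⟨?_, h'.1⟩
    apply Complex.ext <;> simp [← h'.2]
  intro f
  have ht : Tendsto (fun F : Finset Γ => ∑ x ∈ F, f x • delta x) atTop (𝓝 f) := by
    have := lp.hasSum_single (p := 2) (by norm_num) f
    simpa [HasSum, delta, ← lp.single_smul] using this
  have hc : Continuous fun g : L2 Γ => inner ℂ g (convOp φ g) := by fun_prop
  refine ge_of_tendsto' ((hc.tendsto f).comp ht) fun F => ?_
  refine (IsPosDefFn.sum_finset hφ F f).trans_eq ?_
  simp only [Function.comp, map_sum, map_smul, sum_inner, inner_sum, inner_smul_left,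
    inner_smul_right, inner_delta_left, convOp_delta, Finset.mul_sum]
  refine Finset.sum_congr rfl fun x _ => Finset.sum_congr rfl fun y _ => by ring

/-- Stated for an abstract Hilbert space because the C⋆-algebra instances behind `CFC.sqrt` are not
found for operators on the concrete space `L2 Γ`. -/
lemma exists_sqrt {H : Type*} [NormedAddCommGroup H] [InnerProductSpace ℂ H] [CompleteSpace H]
    (T : H →L[ℂ] H) (hT : 0 ≤ T) :
    ∃ S : H →L[ℂ] H, S * S = T ∧ IsSelfAdjoint S ∧ ∀ A, Commute T A → Commute S A :=
  ⟨CFC.sqrt T, CFC.sqrt_mul_sqrt_self _ hT, (CFC.sqrt_nonneg _).isSelfAdjoint,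
    fun _ h => h.cfcₙ_nnreal _⟩

/-- A finitely supported positive definite function is a coefficient of the left regular
representation: `φ s = ⟪ξ, leftReg s ξ⟫` for `ξ = √(convOp φ) δ₁`. -/
lemma exists_vector (φ : Γ → ℂ) (hf : (Function.support φ).Finite) (hφ : IsPosDefFn φ) :
    ∃ ξ : L2 Γ, ∀ s, inner ℂ ξ (leftReg s ξ) = φ s := by
  set ψ : Γ →₀ ℂ := Finsupp.ofSupportFinite φ hf
  have hψ : (ψ : Γ → ℂ) = φ := rfl
  have h0 : 0 ≤ convOp ψ := convOp_nonneg ψ (hψ ▸ hφ)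
  -- `convOp ψ` commutes with the left regular representation, hence so does its square root `S`.
  obtain ⟨S, hSS, hsa, hcomm'⟩ := exists_sqrt (convOp ψ) h0
  have hcomm (s : Γ) : S * leftReg s = leftReg s * S := hcomm' _ (leftReg_convOp ψ s).symm
  refine ⟨S (delta 1), fun s => ?_⟩
  have h1 : leftReg s (S (delta 1)) = S (delta s) := by
    have := congrArg (fun A : L2 Γ →L[ℂ] L2 Γ => A (delta 1)) (hcomm s)
    simpa [leftReg_delta] using this.symm
  have h2 : inner ℂ (S (delta 1)) (S (delta s)) = inner ℂ (delta 1) (S (S (delta s))) := by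
    have := ContinuousLinearMap.adjoint_inner_left S (S (delta s)) (delta 1)
    rwa [← ContinuousLinearMap.star_eq_adjoint, hsa.star_eq] at this
  have h3 : S (S (delta s)) = convOp ψ (delta s) := by rw [← hSS]; rfl
  rw [h1, h2, h3, inner_delta_left, convOp_delta]
  simp [hψ]

lemma leftReg_mul (s t : Γ) (ξ : L2 Γ) : leftReg (s * t) ξ = leftReg s (leftReg t ξ) := by
  ext x
  simp [mul_assoc]

@[simp] lemma leftReg_one (ξ : L2 Γ) : leftReg 1 ξ = ξ := by
  ext x
  simp

lemma inner_leftReg (s : Γ) (ξ η : L2 Γ) :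
    inner ℂ (leftReg s ξ) (leftReg s η) = inner ℂ ξ η := inner_reindex _ ξ η

lemma norm_leftReg (s : Γ) (ξ : L2 Γ) : ‖leftReg s ξ‖ = ‖ξ‖ := norm_reindex _ ξ

/-! ### From positive definite functions to an invariant mean -/

/-- The value at `f` of the integration functional `f ↦ ∑ₓ f x |ξ x|²` changes little when `f` is
translated, provided that `ξ` is nearly invariant. -/
lemma norm_inner_mulOp_sub_le (s : Γ) (f g : lp (fun _ : Γ => ℂ) ∞)
    (hfg : ∀ x, g x = f (s⁻¹ * x)) (ξ : L2 Γ) :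
    ‖inner ℂ ξ (mulOp g ξ) - inner ℂ ξ (mulOp f ξ)‖ ≤
      2 * ‖f‖ * ‖ξ‖ * ‖leftReg s⁻¹ ξ - ξ‖ := by
  set η := leftReg s⁻¹ ξ with hη
  have h1 : inner ℂ ξ (mulOp g ξ) = inner ℂ η (mulOp f η) := by
    rw [← inner_leftReg s η, hη, ← leftReg_mul, mul_inv_cancel, leftReg_one]
    congr 1
    ext x
    simp [hfg]
  have h2 : inner ℂ ξ (mulOp g ξ) - inner ℂ ξ (mulOp f ξ) =
      inner ℂ (η - ξ) (mulOp f η) + inner ℂ ξ (mulOp f (η - ξ)) := by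
    rw [h1, map_sub, inner_sub_left, inner_sub_right]
    ring
  have hn : ‖η‖ = ‖ξ‖ := norm_leftReg _ _
  rw [h2]
  calc _ ≤ ‖η - ξ‖ * ‖mulOp f η‖ + ‖ξ‖ * ‖mulOp f (η - ξ)‖ :=
        norm_add_le_of_le (norm_inner_le_norm _ _) (norm_inner_le_norm _ _)
    _ ≤ ‖η - ξ‖ * (‖f‖ * ‖η‖) + ‖ξ‖ * (‖f‖ * ‖η - ξ‖) := by
        gcongr <;> exact norm_mulOp_le _ _
    _ = _ := by rw [hn]; ring

/-- An invariant mean is obtained as an ultralimit of the states `f ↦ ∑ₓ f x |ξₙ x|²`. -/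
lemma isAmenable_of_vectors (ξ : ℕ → L2 Γ) (h1 : Tendsto (fun n => ‖ξ n‖) atTop (𝓝 1))
    (h2 : ∀ s, Tendsto (fun n => ‖leftReg s (ξ n) - ξ n‖) atTop (𝓝 0)) : IsAmenable Γ := by
  let U : Ultrafilter ℕ := Ultrafilter.of atTop
  have hU : (U : Filter ℕ) ≤ atTop := Ultrafilter.of_le atTop
  have hlim (f : lp (fun _ : Γ => ℂ) ∞) :
      ∃ a, Tendsto (fun n => inner ℂ (ξ n) (mulOp f (ξ n))) U (𝓝 a) := by
    have hb : ∀ᶠ n in atTop,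
        inner ℂ (ξ n) (mulOp f (ξ n)) ∈ Metric.closedBall (0 : ℂ) (2 * (‖f‖ * 2)) := by
      filter_upwards [h1.eventually_le_const (show (1 : ℝ) < 2 by norm_num)] with n hn
      rw [mem_closedBall_zero_iff]
      calc _ ≤ ‖ξ n‖ * ‖mulOp f (ξ n)‖ := norm_inner_le_norm _ _
        _ ≤ ‖ξ n‖ * (‖f‖ * ‖ξ n‖) := by gcongr; exact norm_mulOp_le _ _
        _ ≤ _ := by gcongr
    obtain ⟨a, -, ha⟩ := (isCompact_closedBall (0 : ℂ) (2 * (‖f‖ * 2))).ultrafilter_le_nhds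
      (U.map fun n => inner ℂ (ξ n) (mulOp f (ξ n))) (le_principal_iff.2 (hU hb))
    exact ⟨a, ha⟩
  choose m hm using hlim
  refine ⟨{ toFun := m, map_add' := fun f g => ?_, map_smul' := fun c f => ?_ }, ?_, ?_, ?_⟩
  · refine tendsto_nhds_unique (hm (f + g)) (((hm f).add (hm g)).congr fun n => ?_)
    rw [map_add, LinearMap.add_apply, inner_add_right]
  · refine tendsto_nhds_unique (hm (c • f)) (((hm f).const_mul c).congr fun n => ?_)
    rw [map_smul, LinearMap.smul_apply, inner_smul_right]
  · intro f hf
    exact ge_of_tendsto' (hm f) fun n => inner_mulOp_nonneg f hf (ξ n)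
  · intro f hf
    refine tendsto_nhds_unique (hm f) ?_
    have h : Tendsto (fun n => ((‖ξ n‖ : ℂ)) ^ 2) atTop (𝓝 1) := by
      have := (Complex.continuous_ofReal.tendsto 1).comp h1
      simpa using this.pow 2
    refine (h.mono_left hU).congr fun n => ?_
    have : mulOp f (ξ n) = ξ n := by
      ext x
      simp [hf]
    rw [this, inner_self_eq_norm_sq_to_K]
    rfl
  · intro s f g hfg
    have hd : Tendsto (fun n => inner ℂ (ξ n) (mulOp g (ξ n)) - inner ℂ (ξ n) (mulOp f (ξ n)))
        atTop (𝓝 0) := by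
      refine squeeze_zero_norm (fun n => norm_inner_mulOp_sub_le s f g hfg (ξ n)) ?_
      simpa using (h1.const_mul (2 * ‖f‖)).mul (h2 s⁻¹)
    exact sub_eq_zero.1 (tendsto_nhds_unique ((hm g).sub (hm f)) (hd.mono_left hU))

/-- Finitely supported positive definite functions tending to `1` give nearly invariant vectors,
because `‖leftReg s ξ - ξ‖² = 2 (φ 1 - Re φ s)`. -/
lemma isAmenable_of_posDef (φ : ℕ → Γ → ℂ)
    (h : ∀ n, (Function.support (φ n)).Finite ∧ IsPosDefFn (φ n))
    (hlim : ∀ s, Tendsto (fun n => φ n s) atTop (𝓝 1)) : IsAmenable Γ := by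
  choose ξ hξ using fun n => exists_vector (φ n) (h n).1 (h n).2
  have hre (s : Γ) : Tendsto (fun n => (φ n s).re) atTop (𝓝 1) :=
    (Complex.continuous_re.tendsto 1).comp (hlim s)
  have hsq (n : ℕ) : ‖ξ n‖ ^ 2 = (φ n 1).re := by
    rw [← hξ, leftReg_one, inner_self_eq_norm_sq_to_K]
    norm_cast
  refine isAmenable_of_vectors ξ ?_ fun s => ?_
  · have := (hre 1).sqrt
    rw [Real.sqrt_one] at this
    exact this.congr fun n => by rw [← hsq, Real.sqrt_sq (norm_nonneg _)]
  · have hd (n : ℕ) : ‖leftReg s (ξ n) - ξ n‖ = √(2 * (φ n 1).re - 2 * (φ n s).re) := by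
      rw [← Real.sqrt_sq (norm_nonneg (leftReg s (ξ n) - ξ n)), norm_sub_sq (𝕜 := ℂ),
        norm_leftReg, hsq, ← inner_conj_symm, RCLike.conj_re, hξ]
      congr 1
      simp only [RCLike.re_to_complex]
      ring
    simp_rw [hd]
    simpa using (((hre 1).const_mul 2).sub ((hre s).const_mul 2)).sqrt

/-! ### From an invariant mean to positive definite functions -/

/-- Day's argument: a left-invariant mean yields finitely supported probability densities `h` on `Γ`
that are nearly invariant in `ℓ¹` under a given finite set. Otherwise the Hahn–Banach theorem
separates `0` from the tuples of differences `(s • h - h)_s`, and the bounded functions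
representing the separating functional contradict the invariance of the mean. -/
lemma exists_almost_invariant (hΓ : IsAmenable Γ) (E : Finset Γ) {ε : ℝ} (hε : 0 < ε) :
    ∃ h : Γ →₀ ℝ, (∀ x, 0 ≤ h x) ∧ (h.sum fun _ a => a) = 1 ∧
      ∀ s ∈ E, ∃ d : lp (fun _ : Γ => ℝ) 1, (∀ x, d x = h (s⁻¹ * x) - h x) ∧ ‖d‖ < ε := by
  classical
  obtain ⟨m, hpos, hone, hinv⟩ := hΓ
  let δ (x : Γ) : lp (fun _ : Γ => ℝ) 1 := lp.single 1 x 1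
  have hδ (x : Γ) : ‖δ x‖ = 1 := by simp [δ, lp.norm_single]
  let d (x : Γ) : E → lp (fun _ : Γ => ℝ) 1 := fun s => δ (s * x) - δ x
  let Φ := Finsupp.linearCombination ℝ d
  let K : Set (Γ →₀ ℝ) := {h | (∀ x, 0 ≤ h x) ∧ (h.sum fun _ a => a) = 1}
  have hK : Convex ℝ K := by
    intro f hf g hg a b ha hb hab
    refine ⟨fun x => ?_, ?_⟩
    · have := hf.1 x
      have := hg.1 x
      simp only [Finsupp.add_apply, Finsupp.smul_apply, smul_eq_mul]
      positivity
    · rw [Finsupp.sum_add_index' (by simp) (by simp), Finsupp.sum_smul_index' (by simp),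
        Finsupp.sum_smul_index' (by simp)]
      simp only [smul_eq_mul, ← Finsupp.mul_sum, hf.2, hg.2]
      linarith
  have hΦ (h : Γ →₀ ℝ) (s : E) (y : Γ) : Φ h s y = h ((s : Γ)⁻¹ * y) - h y := by
    induction h using Finsupp.induction_linear with
    | zero => simp
    | add f g hf hg =>
      rw [map_add, Pi.add_apply, lp.coeFn_add, Pi.add_apply, hf, hg]
      simp only [Finsupp.add_apply]
      ring
    | single a r =>
      simp only [Φ, Finsupp.linearCombination_single, Pi.smul_apply, lp.coeFn_smul, d, δ,
        lp.coeFn_sub, Pi.sub_apply, lp.coeFn_single, Pi.single_apply, Finsupp.single_apply,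
        smul_eq_mul, eq_inv_mul_iff_mul_eq, mul_sub, mul_ite, mul_one, mul_zero]
      simp only [eq_comm]
  suffices h0 : (0 : E → lp (fun _ : Γ => ℝ) 1) ∈ closure (Φ '' K) by
    obtain ⟨_, ⟨h, hh, rfl⟩, hd⟩ := Metric.mem_closure_iff.1 h0 ε hε
    rw [dist_zero_left] at hd
    exact ⟨h, hh.1, hh.2, fun s hs =>
      ⟨Φ h ⟨s, hs⟩, hΦ h ⟨s, hs⟩, (norm_le_pi_norm (Φ h) ⟨s, hs⟩).trans_lt hd⟩⟩
  by_contra h0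
  obtain ⟨F, u, hu0, hu⟩ := geometric_hahn_banach_point_closed
    (hK.linear_image Φ).closure isClosed_closure h0
  rw [map_zero] at hu0
  -- The bounded functions on `Γ` representing the components of `F`.
  let k (s : E) (x : Γ) : ℝ := F (Pi.single s (δ x))
  have hk (s : E) (x : Γ) : ‖k s x‖ ≤ ‖F‖ := by
    refine (F.le_opNorm _).trans_eq ?_
    rw [Pi.norm_single, hδ, mul_one]
  have hmem (s : E) (τ : Γ → Γ) : Memℓp (fun x => (k s (τ x) : ℂ)) ∞ := by
    refine memℓp_infty ⟨‖F‖, ?_⟩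
    rintro _ ⟨x, rfl⟩
    simpa using hk s (τ x)
  let f (s : E) : lp (fun _ : Γ => ℂ) ∞ := ⟨fun x => (k s x : ℂ), hmem s id⟩
  let g (s : E) : lp (fun _ : Γ => ℂ) ∞ := ⟨fun x => (k s (s * x) : ℂ), hmem s _⟩
  have hgf (s : E) : m (g s) = m (f s) := hinv (s : Γ)⁻¹ (f s) (g s) fun x => by
    simp only [inv_inv]
    rfl
  have hFd (x : Γ) : u < ∑ s : E, (k s (s * x) - k s x) := by
    have h1 : F (d x) = ∑ s : E, (k s (s * x) - k s x) := by
      conv_lhs => rw [← Finset.univ_sum_single (d x)]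
      rw [map_sum]
      refine Finset.sum_congr rfl fun s _ => ?_
      simp only [k, d]
      rw [← map_sub, ← Pi.single_sub]
    rw [← h1]
    refine hu _ (subset_closure ⟨Finsupp.single x 1, ⟨fun y => ?_, by simp⟩, by simp [Φ]⟩)
    rw [Finsupp.single_apply]
    positivity
  -- The mean of a function that is at least `u > 0` is at least `u`, but invariance makes it `0`.
  have hp := hpos (∑ s : E, (g s - f s) - (u : ℂ) • 1) fun x => by
    have h1 : (∑ s : E, (g s - f s) - (u : ℂ) • (1 : lp (fun _ : Γ => ℂ) ∞)) x =
        ((∑ s : E, (k s (s * x) - k s x) - u : ℝ) : ℂ) := by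
      rw [lp.coeFn_sub, Pi.sub_apply, lp.coeFn_sum, Finset.sum_apply, lp.coeFn_smul,
        Pi.smul_apply, lp.infty_coeFn_one]
      rw [Finset.sum_congr rfl fun s _ => show (g s - f s : lp (fun _ : Γ => ℂ) ∞) x =
        ((k s (s * x) - k s x : ℝ) : ℂ) by
          simp only [lp.coeFn_sub, Pi.sub_apply, f, g]
          push_cast
          rfl]
      push_cast
      simp
    rw [h1, Complex.zero_le_real]
    linarith [hFd x]
  rw [map_sub, map_sum, map_smul, hone 1 fun x => by rw [lp.infty_coeFn_one]; rfl] at hp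
  simp only [map_sub, hgf, sub_self, Finset.sum_const_zero, smul_eq_mul, mul_one, zero_sub] at hp
  rw [← Complex.ofReal_neg, Complex.zero_le_real] at hp
  linarith

/-- Coefficients of the left regular representation are positive definite. -/
lemma isPosDefFn_coeff (ξ : L2 Γ) : IsPosDefFn fun s => inner ℂ ξ (leftReg s ξ) := by
  intro n s z
  have h : ∑ i, ∑ j, inner ℂ ξ (leftReg ((s j)⁻¹ * s i) ξ) * z i * conj (z j) =
      inner ℂ (∑ j, z j • leftReg (s j) ξ) (∑ i, z i • leftReg (s i) ξ) := by
    simp only [sum_inner, inner_sum, inner_smul_left, inner_smul_right, Finset.mul_sum]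
    refine Finset.sum_congr rfl fun i _ => Finset.sum_congr rfl fun j _ => ?_
    rw [← inner_leftReg (s j) ξ, ← leftReg_mul, mul_inv_cancel_left]
    ring
  rw [h, Complex.nonneg_iff]
  exact ⟨inner_self_nonneg (𝕜 := ℂ), (inner_self_im (𝕜 := ℂ) _).symm⟩

lemma finite_support_coeff (ξ : L2 Γ) (hξ : (Function.support ξ).Finite) :
    (Function.support fun s => inner ℂ ξ (leftReg s ξ)).Finite := by
  refine (hξ.image2 (fun x y => x * y⁻¹) hξ).subset fun s hs => ?_
  obtain ⟨x, hx⟩ : ∃ x, inner ℂ (ξ x) (leftReg s ξ x) ≠ 0 := by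
    by_contra! hc
    exact hs (by simp only [lp.inner_eq_tsum, hc, tsum_zero])
  refine ⟨x, fun h => hx (by simp [h]), s⁻¹ * x, fun h => hx (by simp [h]), by simp⟩

lemma sq_sqrt_sub_sqrt_le {a b : ℝ} (ha : 0 ≤ a) (hb : 0 ≤ b) : (√a - √b) ^ 2 ≤ |a - b| := by
  have h : |a - b| = |√a - √b| * (√a + √b) := by
    rw [← abs_of_nonneg (add_nonneg (Real.sqrt_nonneg a) (Real.sqrt_nonneg b)), ← abs_mul]
    congr 1
    nlinarith [Real.sq_sqrt ha, Real.sq_sqrt hb]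
  rw [h, ← sq_abs, sq]
  gcongr
  rw [abs_le]
  constructor <;> linarith [Real.sqrt_nonneg a, Real.sqrt_nonneg b]

/-- With `h` a nearly invariant density, the coefficient of the unit vector `√h` is positive
definite, finitely supported and close to `1`. -/
lemma exists_posDef_near_one (hΓ : IsAmenable Γ) (E : Finset Γ) {ε : ℝ} (hε : 0 < ε) :
    ∃ φ : Γ → ℂ, ((Function.support φ).Finite ∧ IsPosDefFn φ) ∧ ∀ s ∈ E, ‖φ s - 1‖ ≤ ε := by
  obtain ⟨h, hpos, hsum, hE⟩ := exists_almost_invariant hΓ E (pow_pos hε 2)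
  have hfin : (Function.support fun x => ((√(h x) : ℝ) : ℂ)).Finite := by
    refine h.hasFiniteSupport.subset fun x hx hx0 => hx ?_
    simp [hx0]
  let ψ : L2 Γ := ⟨fun x => ((√(h x) : ℝ) : ℂ), (memℓp_zero hfin).of_exponent_ge zero_le⟩
  have hnormsq (ξ : L2 Γ) : ‖ξ‖ ^ 2 = ∑' x, ‖ξ x‖ ^ 2 := by
    have := lp.norm_rpow_eq_tsum (p := 2) (by norm_num) ξ
    simpa using this
  have hψ : ‖ψ‖ = 1 := by
    rw [← sq_eq_sq₀ (norm_nonneg _) zero_le_one, one_pow, hnormsq, ← hsum, Finsupp.sum]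
    have (x : Γ) : ‖ψ x‖ ^ 2 = h x := by
      simp only [ψ, Complex.norm_real, Real.norm_eq_abs, sq_abs, Real.sq_sqrt (hpos x)]
    simp_rw [this]
    exact tsum_eq_sum fun x hx => by simpa using hx
  refine ⟨fun s => inner ℂ ψ (leftReg s ψ),
    ⟨finite_support_coeff ψ hfin, isPosDefFn_coeff ψ⟩, fun s hs => ?_⟩
  obtain ⟨d, hd, hdε⟩ := hE s hs
  have hle : ‖leftReg s ψ - ψ‖ ^ 2 ≤ ‖d‖ := by
    have hd1 : HasSum (fun x => ‖d x‖) ‖d‖ := by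
      simpa using lp.hasSum_norm (p := 1) (by norm_num) d
    rw [hnormsq, ← hd1.tsum_eq]
    have hs2 : Summable fun x => ‖(leftReg s ψ - ψ) x‖ ^ 2 := by
      simpa using (lp.memℓp (leftReg s ψ - ψ)).summable (by norm_num)
    refine hs2.tsum_le_tsum (fun x => ?_) hd1.summable
    have : (leftReg s ψ - ψ) x = ((√(h (s⁻¹ * x)) - √(h x) : ℝ) : ℂ) := by
      rw [lp.coeFn_sub, Pi.sub_apply, leftReg_apply]
      simp [ψ]
    rw [this, hd, Complex.norm_real, Real.norm_eq_abs, sq_abs]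
    exact sq_sqrt_sub_sqrt_le (hpos _) (hpos _)
  have h1 : inner ℂ ψ (leftReg s ψ) - 1 = inner ℂ ψ (leftReg s ψ - ψ) := by
    rw [inner_sub_right, inner_self_eq_norm_sq_to_K, hψ]
    simp
  calc ‖inner ℂ ψ (leftReg s ψ) - 1‖ ≤ ‖ψ‖ * ‖leftReg s ψ - ψ‖ := by
        rw [h1]; exact norm_inner_le_norm _ _
    _ = ‖leftReg s ψ - ψ‖ := by rw [hψ, one_mul]
    _ ≤ ε := le_of_sq_le_sq (hle.trans hdε.le) hε.le

end AmenablePosDef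

/-- A countable discrete group is amenable iff the constant function `1` can be
approximated pointwise by finitely supported positive definite functions. -/
theorem isAmenable_iff_posdef_approx (Γ : Type*) [Group Γ] [Countable Γ] :
    IsAmenable Γ ↔
      ∃ φ : ℕ → Γ → ℂ,
        (∀ n, (Function.support (φ n)).Finite ∧ IsPosDefFn (φ n)) ∧
        ∀ s : Γ, Filter.Tendsto (fun n => φ n s) Filter.atTop (nhds 1) := by
  constructor
  · intro hΓ
    classical
    obtain ⟨e, he⟩ := exists_surjective_nat Γ
    choose φ hφ hnear using fun n : ℕ => AmenablePosDef.exists_posDef_near_one hΓ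
      ((Finset.range n).image e) (Nat.one_div_pos_of_nat (α := ℝ) (n := n))
    refine ⟨φ, hφ, fun s => ?_⟩
    obtain ⟨k, rfl⟩ := he s
    rw [tendsto_iff_norm_sub_tendsto_zero]
    refine squeeze_zero' (.of_forall fun _ => norm_nonneg _) ?_
      tendsto_one_div_add_atTop_nhds_zero_nat
    filter_upwards [Filter.eventually_gt_atTop k] with n hn
    exact hnear n _ (Finset.mem_image_of_mem e (Finset.mem_range.2 hn))
  · rintro ⟨φ, hφ, hlim⟩
    exact AmenablePosDef.isAmenable_of_posDef φ hφ hlim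
end
end
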